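/- arXiv:2110.13371 — 2 statements merged into one kernel-verified Lean document; each statement's English description precedes it below -/
import Mathlib

section
/- Let A₁, …, Aₙ be m×m positive definite complex matrices and let w = (w₁, …, wₙ) be a weight (wᵢ > 0, Σᵢ wᵢ = 1). Then the function F(X) = Σᵢ wᵢ δ²(X, Aᵢ) on the set of positive definite matrices attains a minimum at exactly one positive definite matrix X; i.e., the weighted least squares mean Λ(w; A₁, …, Aₙ) exists and is unique. -/
/-!
The existence and uniqueness of the weighted least squares mean rest on the nonpositive curvature of
the cone of positive definite matrices, expressed by the semiparallelogram law
`δ²(M, A) ≤ δ²(X, A)/2 + δ²(Y, A)/2 - δ²(X, Y)/4` for the midpoint `M` of `X` and `Y`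
(`exists_midpoint`). Averaging it over the `Aᵢ` shows that two minimizers `X`, `Y` satisfy
`δ(X, Y) = 0`, hence coincide. A minimizer exists because `F` is continuous (`continuousOn_rdist`) and
its sublevel sets lie in compact sets of positive definite matrices (`exists_compact_ball`).

The semiparallelogram law and the triangle inequality both follow, after a congruence moving one point
to the identity, from the exponential metric increasing property `‖log Q - log P‖₂ ≤ δ(P, Q)`
(`norm_log_sub_log_le_rdist`). Its proof uses no derivative of the matrix logarithm. If `P`, `Q` have
eigenbases `u`, `v` and log-eigenvalues `a`, `b`, then with `pᵢⱼ = |⟨uᵢ, vⱼ⟩|²`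
`‖log Q - log P‖₂² = ∑ pᵢⱼ (bⱼ - aᵢ)² ≤ ∑ pᵢⱼ (2 cosh (bⱼ - aᵢ) - 2) = Tr(P⁻¹Q) + Tr(Q⁻¹P) - 2m`,
and the last expression equals `∑ (2 cosh zₖ - 2)`, where `zₖ` are the logarithms of the eigenvalues
of `P⁻¹Q`, so that `δ²(P, Q) = ∑ zₖ²`. Applying this to `N` equal pieces of the geodesic from `P` to
`Q` gives `‖log Q - log P‖₂² ≤ N² ∑ (2 cosh (zₖ/N) - 2)`, which tends to `δ²(P, Q)`.

Distances are computed throughout in simultaneously diagonalizing coordinates `P = C Cᴴ`,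
`Q = C exp(diag z) Cᴴ` with `C` invertible (`exists_simdiag`, `rdist_cng`), in which congruence
invariance and symmetry of `δ` are immediate.
-/

open Matrix
open scoped ComplexOrder

noncomputable def matFun {m : ℕ} (f : ℝ → ℝ) (A : Matrix (Fin m) (Fin m) ℂ) :
    Matrix (Fin m) (Fin m) ℂ :=
  if hA : A.IsHermitian then
    (hA.eigenvectorUnitary : Matrix (Fin m) (Fin m) ℂ) *
      Matrix.diagonal (fun i => (f (hA.eigenvalues i) : ℂ)) *
      (star (hA.eigenvectorUnitary : Matrix (Fin m) (Fin m) ℂ))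
  else 0

/-- The unique positive definite square root of a positive definite matrix
(realized via the spectral decomposition). -/
noncomputable def msqrt {m : ℕ} (A : Matrix (Fin m) (Fin m) ℂ) : Matrix (Fin m) (Fin m) ℂ :=
  matFun Real.sqrt A

/-- The logarithm of a positive definite matrix: the unique Hermitian `L` with `exp L = A`. -/
noncomputable def mlog {m : ℕ} (A : Matrix (Fin m) (Fin m) ℂ) : Matrix (Fin m) (Fin m) ℂ :=
  matFun Real.log A

/-- The real power `A ^ t` of a positive definite matrix, via the spectral decomposition. -/
noncomputable def mpow {m : ℕ} (A : Matrix (Fin m) (Fin m) ℂ) (t : ℝ) : Matrix (Fin m) (Fin m) ℂ :=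
  matFun (fun x => x ^ t) A

/-- The matrix geometric mean `A # B`. -/
noncomputable def gmean {m : ℕ} (A B : Matrix (Fin m) (Fin m) ℂ) : Matrix (Fin m) (Fin m) ℂ :=
  msqrt A * msqrt ((msqrt A)⁻¹ * B * (msqrt A)⁻¹) * msqrt A

/-- The weighted geometric mean `A #_t B`. -/
noncomputable def wgmean {m : ℕ} (A B : Matrix (Fin m) (Fin m) ℂ) (t : ℝ) :
    Matrix (Fin m) (Fin m) ℂ :=
  msqrt A * mpow ((msqrt A)⁻¹ * B * (msqrt A)⁻¹) t * msqrt A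

/-- The Frobenius (Hilbert–Schmidt) norm `‖X‖₂ = (Tr(X*X))^{1/2}`. -/
noncomputable def fnorm {m : ℕ} (X : Matrix (Fin m) (Fin m) ℂ) : ℝ :=
  Real.sqrt ((Xᴴ * X).trace.re)

/-- The Riemannian metric `δ(A,B) = ‖log(A^{-1/2} B A^{-1/2})‖₂`. -/
noncomputable def rdist {m : ℕ} (A B : Matrix (Fin m) (Fin m) ℂ) : ℝ :=
  fnorm (mlog ((msqrt A)⁻¹ * B * (msqrt A)⁻¹))

/-- The Loewner order: `A ≤ B` iff `B - A` is positive semidefinite. -/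
def Loewner {m : ℕ} (A B : Matrix (Fin m) (Fin m) ℂ) : Prop :=
  (B - A).PosSemidef


/-! ### Simultaneous diagonalization by congruence -/

section

variable {m : ℕ}
/-- The diagonal complex matrix with the given real diagonal entries. -/
noncomputable def rdiag (a : Fin m → ℝ) : Matrix (Fin m) (Fin m) ℂ :=
  Matrix.diagonal (fun i => (a i : ℂ))

/-- The exponential of the real diagonal matrix `rdiag z`. -/
noncomputable def expDiag (z : Fin m → ℝ) : Matrix (Fin m) (Fin m) ℂ :=
  rdiag (fun i => Real.exp (z i))

/-- The congruence transform `C * exp(rdiag z) * Cᴴ`. For unitary `C` it is the exponential of the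
Hermitian matrix `C * rdiag z * Cᴴ`; for fixed invertible `C` the matrices `cng C (t • z)`, `t` real,
form a geodesic of the Riemannian metric. -/
noncomputable def cng (C : Matrix (Fin m) (Fin m) ℂ) (z : Fin m → ℝ) :
    Matrix (Fin m) (Fin m) ℂ :=
  C * expDiag z * Cᴴ

lemma rdiag_mul (a b : Fin m → ℝ) : rdiag a * rdiag b = rdiag (fun i => a i * b i) := by
  simp [rdiag, Matrix.diagonal_mul_diagonal]

lemma rdiag_conjTranspose (a : Fin m → ℝ) : (rdiag a)ᴴ = rdiag a := by
  simp [rdiag, Matrix.diagonal_conjTranspose, Pi.star_def]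

lemma rdiag_one : rdiag (fun _ : Fin m => (1 : ℝ)) = 1 := by
  simp [rdiag]

lemma expDiag_mul (a b : Fin m → ℝ) : expDiag a * expDiag b = expDiag (a + b) := by
  simp [expDiag, rdiag_mul, Real.exp_add]

lemma expDiag_zero : expDiag (0 : Fin m → ℝ) = 1 := by
  simp [expDiag, rdiag_one]

lemma expDiag_conjTranspose (a : Fin m → ℝ) : (expDiag a)ᴴ = expDiag a :=
  rdiag_conjTranspose _

lemma expDiag_isUnit (a : Fin m → ℝ) : IsUnit (expDiag a) := by
  refine IsUnit.of_mul_eq_one (expDiag (-a)) ?_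
  rw [expDiag_mul, add_neg_cancel, expDiag_zero]

lemma expDiag_posDef (a : Fin m → ℝ) : (expDiag a).PosDef := by
  refine Matrix.PosDef.diagonal fun i => ?_
  exact_mod_cast Real.exp_pos _

lemma cng_zero (C : Matrix (Fin m) (Fin m) ℂ) : cng C 0 = C * Cᴴ := by
  simp [cng, expDiag_zero]

lemma cng_mul (B C : Matrix (Fin m) (Fin m) ℂ) (z : Fin m → ℝ) :
    cng (B * C) z = B * cng C z * Bᴴ := by
  simp only [cng, Matrix.conjTranspose_mul, mul_assoc]

lemma cng_mul_expDiag (C : Matrix (Fin m) (Fin m) ℂ) (s z : Fin m → ℝ) :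
    cng (C * expDiag s) z = cng C (s + z + s) := by
  simp only [cng, Matrix.conjTranspose_mul, mul_assoc, expDiag_conjTranspose, ← expDiag_mul]

lemma cng_posDef {C : Matrix (Fin m) (Fin m) ℂ} (hC : IsUnit C) (z : Fin m → ℝ) :
    (cng C z).PosDef :=
  (Matrix.IsUnit.posDef_star_right_conjugate_iff hC).2 (expDiag_posDef z)

/-- The spectral theorem: a positive definite matrix is the exponential of the Hermitian matrix
`U * rdiag a * Uᴴ`. -/
lemma exists_unitary_cng {P : Matrix (Fin m) (Fin m) ℂ} (hP : P.PosDef) :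
    ∃ U ∈ Matrix.unitaryGroup (Fin m) ℂ, ∃ a, P = cng U a := by
  refine ⟨hP.1.eigenvectorUnitary, hP.1.eigenvectorUnitary.2,
    fun i => Real.log (hP.1.eigenvalues i), ?_⟩
  conv_lhs => rw [hP.1.spectral_theorem, Unitary.conjStarAlgAut_apply]
  simp only [cng, expDiag, rdiag, Real.exp_log (hP.eigenvalues_pos _)]
  rfl

lemma isUnit_of_unitary {U : Matrix (Fin m) (Fin m) ℂ}
    (hU : U ∈ Matrix.unitaryGroup (Fin m) ℂ) : IsUnit U :=
  IsUnit.of_mul_eq_one _ (Matrix.mem_unitaryGroup_iff.1 hU)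

lemma isUnit_conjTranspose' {C : Matrix (Fin m) (Fin m) ℂ} (hC : IsUnit C) : IsUnit Cᴴ :=
  hC.star

/-- The spectral theorem for a positive definite matrix in the coordinates where the base point
`C * Cᴴ` becomes the identity. -/
lemma exists_cng_of_isUnit {C P : Matrix (Fin m) (Fin m) ℂ} (hC : IsUnit C) (hP : P.PosDef) :
    ∃ U ∈ Matrix.unitaryGroup (Fin m) ℂ, ∃ a, P = cng (C * U) a := by
  obtain ⟨B, rfl⟩ := hC
  obtain ⟨U, hU, a, h⟩ := exists_unitary_cng
    ((Matrix.IsUnit.posDef_star_right_conjugate_iff (B⁻¹).isUnit).2 hP)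
  refine ⟨U, hU, a, ?_⟩
  rw [cng_mul, ← h]
  have h1 : star ((B⁻¹ : (Matrix (Fin m) (Fin m) ℂ)ˣ) : Matrix (Fin m) (Fin m) ℂ) *
      (B : Matrix (Fin m) (Fin m) ℂ)ᴴ = 1 := by
    rw [← Matrix.star_eq_conjTranspose, ← star_mul, Units.mul_inv, star_one]
  simp only [mul_assoc]
  rw [h1, Units.mul_inv_cancel_left, mul_one]

/-- Two positive definite matrices are simultaneously diagonalizable by congruence. -/
lemma exists_simdiag {P Q : Matrix (Fin m) (Fin m) ℂ} (hP : P.PosDef) (hQ : Q.PosDef) :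
    ∃ C z, IsUnit C ∧ P = cng C 0 ∧ Q = cng C z := by
  obtain ⟨U, hU, a, rfl⟩ := exists_unitary_cng hP
  have hC : IsUnit (U * expDiag (fun i => a i / 2)) :=
    (isUnit_of_unitary hU).mul (expDiag_isUnit _)
  obtain ⟨V, hV, b, rfl⟩ := exists_cng_of_isUnit hC hQ
  refine ⟨_, b, hC.mul (isUnit_of_unitary hV), ?_, rfl⟩
  have h : V * Vᴴ = 1 := Matrix.mem_unitaryGroup_iff.1 hV
  rw [cng_mul, cng_zero, h, mul_one, ← cng_zero, cng_mul_expDiag]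
  congr 1
  ext i
  simp

lemma matFun_eq {A : Matrix (Fin m) (Fin m) ℂ} (hA : A.IsHermitian) (f : ℝ → ℝ) :
    matFun f A = (hA.eigenvectorUnitary : Matrix (Fin m) (Fin m) ℂ) *
      rdiag (fun i => f (hA.eigenvalues i)) *
      (hA.eigenvectorUnitary : Matrix (Fin m) (Fin m) ℂ)ᴴ := by
  rw [matFun, dif_pos hA]; rfl

lemma mul_conj_cancel {U : Matrix (Fin m) (Fin m) ℂ} (hU : U ∈ Matrix.unitaryGroup (Fin m) ℂ)
    (X Y : Matrix (Fin m) (Fin m) ℂ) : (U * X * Uᴴ) * (U * Y * Uᴴ) = U * (X * Y) * Uᴴ := by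
  have h : Uᴴ * U = 1 := Matrix.mem_unitaryGroup_iff'.1 hU
  calc _ = U * X * (Uᴴ * U) * Y * Uᴴ := by simp only [mul_assoc]
    _ = _ := by rw [h, mul_one]; simp only [mul_assoc]

lemma conj_conjTranspose (U : Matrix (Fin m) (Fin m) ℂ) (a : Fin m → ℝ) :
    (U * rdiag a * Uᴴ)ᴴ = U * rdiag a * Uᴴ := by
  simp only [Matrix.conjTranspose_mul, Matrix.conjTranspose_conjTranspose, rdiag_conjTranspose,
    mul_assoc]

lemma msqrt_conjTranspose {P : Matrix (Fin m) (Fin m) ℂ} (hP : P.PosDef) :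
    (msqrt P)ᴴ = msqrt P := by
  rw [msqrt, matFun_eq hP.1, conj_conjTranspose]

lemma msqrt_mul_self {P : Matrix (Fin m) (Fin m) ℂ} (hP : P.PosDef) :
    msqrt P * msqrt P = P := by
  rw [msqrt, matFun_eq hP.1, mul_conj_cancel hP.1.eigenvectorUnitary.2, rdiag_mul]
  conv_rhs => rw [hP.1.spectral_theorem, Unitary.conjStarAlgAut_apply]
  simp only [rdiag, Real.mul_self_sqrt (hP.eigenvalues_pos _).le]
  rfl

lemma fnorm_sq_conj {U : Matrix (Fin m) (Fin m) ℂ} (hU : U ∈ Matrix.unitaryGroup (Fin m) ℂ)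
    (a : Fin m → ℝ) : fnorm (U * rdiag a * Uᴴ) ^ 2 = ∑ i, a i ^ 2 := by
  have h : Uᴴ * U = 1 := Matrix.mem_unitaryGroup_iff'.1 hU
  have key : (((U * rdiag a * Uᴴ)ᴴ * (U * rdiag a * Uᴴ)).trace.re) = ∑ i, a i ^ 2 := by
    rw [conj_conjTranspose, mul_conj_cancel hU, Matrix.trace_mul_comm, ← mul_assoc, h, one_mul,
      rdiag_mul]
    simp [rdiag, Matrix.trace, Matrix.diag, sq]
  rw [fnorm, key, Real.sq_sqrt (Finset.sum_nonneg fun i _ => sq_nonneg _)]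

/-- The Riemannian distance in simultaneously diagonalizing coordinates. With `S = P^{1/2}` and
`P = C * Cᴴ`, the matrix `S⁻¹ * C` is unitary, so the matrix whose logarithm enters `rdist` has the
eigenvalues `exp (z i)`; these are compared through the characteristic polynomial. -/
lemma rdist_cng_zero {C : Matrix (Fin m) (Fin m) ℂ} (hC : IsUnit C) (z : Fin m → ℝ) :
    rdist (cng C 0) (cng C z) ^ 2 = ∑ i, z i ^ 2 := by
  have hP := cng_posDef hC 0
  set S := msqrt (cng C 0) with hS
  have hSS : S * S = C * Cᴴ := by rw [hS, msqrt_mul_self hP, cng_zero]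
  have hSH : Sᴴ = S := msqrt_conjTranspose hP
  have hSu : IsUnit S := by
    have : IsUnit (S * S) := by rw [hSS]; exact hC.mul (isUnit_conjTranspose' hC)
    rw [Matrix.isUnit_iff_isUnit_det] at this ⊢
    rw [Matrix.det_mul] at this
    exact isUnit_of_mul_isUnit_left this
  have hSd : IsUnit S.det := (Matrix.isUnit_iff_isUnit_det _).1 hSu
  have hSi : (S⁻¹)ᴴ = S⁻¹ := by rw [Matrix.conjTranspose_nonsing_inv, hSH]
  have hB : S⁻¹ * cng C z * S⁻¹ = cng (S⁻¹ * C) z := by rw [cng_mul, hSi]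
  have hG : (S⁻¹ * C) * (S⁻¹ * C)ᴴ = 1 := by
    calc _ = S⁻¹ * (C * Cᴴ) * S⁻¹ := by
          rw [Matrix.conjTranspose_mul, hSi]; simp only [mul_assoc]
      _ = (S⁻¹ * S) * (S * S⁻¹) := by rw [← hSS]; simp only [mul_assoc]
      _ = 1 := by rw [Matrix.nonsing_inv_mul _ hSd, Matrix.mul_nonsing_inv _ hSd, one_mul]
  have hG' := Matrix.mem_unitaryGroup_iff'.1 (Matrix.mem_unitaryGroup_iff.2 hG)
  have hBp : (cng (S⁻¹ * C) z).IsHermitian :=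
    (cng_posDef (IsUnit.of_mul_eq_one _ hG) z).1
  rw [rdist, hB, mlog, matFun_eq hBp, fnorm_sq_conj hBp.eigenvectorUnitary.2]
  have hch : (cng (S⁻¹ * C) z).charpoly = (expDiag z).charpoly := by
    rw [cng, Matrix.charpoly_mul_comm, ← mul_assoc]
    erw [hG']
    rw [one_mul]
  have hr := congrArg Polynomial.roots hch
  rw [hBp.roots_charpoly_eq_eigenvalues, expDiag, rdiag, Matrix.charpoly_diagonal,
    Polynomial.roots_prod _ _ (by
      simp [Finset.prod_ne_zero_iff, Polynomial.X_sub_C_ne_zero])] at hr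
  have := congrArg (fun s => (Multiset.map (fun x : ℂ => Real.log x.re ^ 2) s).sum) hr
  simpa [Multiset.map_map, Function.comp_def, List.sum_ofFn, -Complex.ofReal_exp] using this

lemma rdist_cng {C : Matrix (Fin m) (Fin m) ℂ} (hC : IsUnit C) (a b : Fin m → ℝ) :
    rdist (cng C a) (cng C b) ^ 2 = ∑ i, (b i - a i) ^ 2 := by
  have h := rdist_cng_zero (hC.mul (expDiag_isUnit (fun i => a i / 2))) (b - a)
  rw [cng_mul_expDiag, cng_mul_expDiag] at h
  convert h using 3 <;> congr 1 <;> ext i <;> simp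
  ring

/-! ### The cross-trace bound -/

/-- The entries of a matrix as a vector of a Euclidean space, so that the Euclidean norm is the
Frobenius norm. -/
noncomputable def vecEntries (X : Matrix (Fin m) (Fin m) ℂ) : EuclideanSpace ℂ (Fin m × Fin m) :=
  WithLp.toLp 2 fun p => X p.1 p.2

lemma vecEntries_add (X Y : Matrix (Fin m) (Fin m) ℂ) :
    vecEntries (X + Y) = vecEntries X + vecEntries Y := rfl

lemma vecEntries_sub (X Y : Matrix (Fin m) (Fin m) ℂ) :
    vecEntries (X - Y) = vecEntries X - vecEntries Y := rfl

lemma trace_conjTranspose_mul_self_re (X : Matrix (Fin m) (Fin m) ℂ) :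
    (Xᴴ * X).trace.re = ‖vecEntries X‖ ^ 2 := by
  rw [EuclideanSpace.norm_sq_eq, Fintype.sum_prod_type, Finset.sum_comm]
  simp only [Matrix.trace, Matrix.diag, Matrix.mul_apply, Matrix.conjTranspose_apply,
    Complex.re_sum, vecEntries]
  refine Finset.sum_congr rfl fun i _ => Finset.sum_congr rfl fun j _ => ?_
  rw [← Complex.normSq_eq_norm_sq, Complex.star_def, ← Complex.normSq_eq_conj_mul_self,
    Complex.ofReal_re]

lemma fnorm_eq_norm (X : Matrix (Fin m) (Fin m) ℂ) : fnorm X = ‖vecEntries X‖ := by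
  rw [fnorm, trace_conjTranspose_mul_self_re, Real.sqrt_sq (norm_nonneg _)]

lemma trace_conj_mul_conj (U V : Matrix (Fin m) (Fin m) ℂ) (a b : Fin m → ℝ) :
    ((U * rdiag a * Uᴴ) * (V * rdiag b * Vᴴ)).trace.re =
      ∑ i, ∑ j, a i * b j * ‖(Uᴴ * V) i j‖ ^ 2 := by
  have h : ((U * rdiag a * Uᴴ) * (V * rdiag b * Vᴴ)).trace =
      ((rdiag a * (Uᴴ * V)) * (rdiag b * (Uᴴ * V)ᴴ)).trace := by
    rw [mul_assoc U, mul_assoc U, Matrix.trace_mul_comm]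
    simp only [Matrix.conjTranspose_mul, Matrix.conjTranspose_conjTranspose, mul_assoc]
  rw [h]
  generalize Uᴴ * V = W
  simp only [Matrix.trace, Matrix.diag, rdiag, Complex.re_sum, Matrix.mul_apply (M := _ * _),
    Matrix.diagonal_mul, Matrix.conjTranspose_apply]
  refine Finset.sum_congr rfl fun i _ => Finset.sum_congr rfl fun j _ => ?_
  rw [← Complex.normSq_eq_norm_sq]
  simp [Complex.normSq_apply]
  ring

/-- `Tr(P⁻¹Q) + Tr(Q⁻¹P) - 2m`, a smooth substitute for the squared distance: it is
`∑ (2 cosh zᵢ - 2)` where `rdist P Q ^ 2 = ∑ zᵢ ^ 2`. -/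
noncomputable def crossTrace (P Q : Matrix (Fin m) (Fin m) ℂ) : ℝ :=
  (P⁻¹ * Q).trace.re + (Q⁻¹ * P).trace.re - 2 * m

lemma trace_inv_cng_mul_cng {C : Matrix (Fin m) (Fin m) ℂ} (hC : IsUnit C) (a b : Fin m → ℝ) :
    ((cng C a)⁻¹ * cng C b).trace.re = ∑ i, Real.exp (b i - a i) := by
  have hd : IsUnit C.det := (Matrix.isUnit_iff_isUnit_det _).1 hC
  have hd' : IsUnit Cᴴ.det := (Matrix.isUnit_iff_isUnit_det _).1 (isUnit_conjTranspose' hC)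
  have hinv : (expDiag a)⁻¹ = expDiag (-a) := by
    refine Matrix.inv_eq_right_inv ?_
    rw [expDiag_mul, add_neg_cancel, expDiag_zero]
  have h : (cng C a)⁻¹ * cng C b = (Cᴴ)⁻¹ * (expDiag (b - a) * Cᴴ) := by
    rw [cng, cng, Matrix.mul_inv_rev, Matrix.mul_inv_rev, hinv, sub_eq_neg_add, ← expDiag_mul]
    simp only [mul_assoc]
    rw [Matrix.nonsing_inv_mul_cancel_left _ _ hd]
  rw [h, Matrix.trace_mul_comm, mul_assoc, Matrix.mul_nonsing_inv _ hd', mul_one]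
  simp [expDiag, rdiag, Matrix.trace, Matrix.diag, -Complex.ofReal_exp]

lemma crossTrace_cng {C : Matrix (Fin m) (Fin m) ℂ} (hC : IsUnit C) (a b : Fin m → ℝ) :
    crossTrace (cng C a) (cng C b) = ∑ i, (2 * Real.cosh (b i - a i) - 2) := by
  rw [crossTrace, trace_inv_cng_mul_cng hC, trace_inv_cng_mul_cng hC, ← Finset.sum_add_distrib,
    Finset.sum_sub_distrib]
  congr 1
  · refine Finset.sum_congr rfl fun i _ => ?_
    rw [Real.cosh_eq, neg_sub]; ring
  · simp [mul_comm]

lemma sq_le_two_cosh (x : ℝ) : x ^ 2 ≤ 2 * Real.cosh x - 2 := by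
  have h1 : Real.cosh x = 1 + 2 * Real.sinh (x / 2) ^ 2 := by
    have h := Real.cosh_two_mul (x / 2)
    rw [mul_div_cancel₀ x two_ne_zero, Real.cosh_sq] at h
    linarith
  have h2 : (x / 2) ^ 2 ≤ Real.sinh (x / 2) ^ 2 := by
    rcases le_total 0 (x / 2) with h | h
    · exact pow_le_pow_left₀ h (Real.self_le_sinh_iff.2 h) 2
    · nlinarith [Real.sinh_le_self_iff.2 h]
  linarith

lemma rdist_sq_le_crossTrace {P Q : Matrix (Fin m) (Fin m) ℂ} (hP : P.PosDef) (hQ : Q.PosDef) :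
    rdist P Q ^ 2 ≤ crossTrace P Q := by
  obtain ⟨C, z, hC, rfl, rfl⟩ := exists_simdiag hP hQ
  rw [rdist_cng hC, crossTrace_cng hC]
  exact Finset.sum_le_sum fun i _ => sq_le_two_cosh _

lemma cng_inv_of_unitary {U : Matrix (Fin m) (Fin m) ℂ}
    (hU : U ∈ Matrix.unitaryGroup (Fin m) ℂ) (a : Fin m → ℝ) : (cng U a)⁻¹ = cng U (-a) := by
  refine Matrix.inv_eq_right_inv ?_
  rw [cng, cng, mul_conj_cancel hU, expDiag_mul, add_neg_cancel, expDiag_zero, mul_one]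
  exact Matrix.mem_unitaryGroup_iff.1 hU

/-- The squared Frobenius distance of the logarithms is at most the cross trace. With
`pᵢⱼ = |(Uᴴ V)ᵢⱼ|²`, the left side is `∑ pᵢⱼ (bⱼ - aᵢ)²` and the right side is
`∑ pᵢⱼ (2 cosh (bⱼ - aᵢ) - 2)`. -/
lemma norm_log_sub_log_sq_le_crossTrace {U V : Matrix (Fin m) (Fin m) ℂ}
    (hU : U ∈ Matrix.unitaryGroup (Fin m) ℂ) (hV : V ∈ Matrix.unitaryGroup (Fin m) ℂ)
    (a b : Fin m → ℝ) :
    ‖vecEntries (V * rdiag b * Vᴴ - U * rdiag a * Uᴴ)‖ ^ 2 ≤ crossTrace (cng U a) (cng V b) := by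
  have hU1 : U * rdiag (fun _ => 1) * Uᴴ = 1 := by
    rw [rdiag_one, mul_one]; exact Matrix.mem_unitaryGroup_iff.1 hU
  have hV1 : V * rdiag (fun _ => 1) * Vᴴ = 1 := by
    rw [rdiag_one, mul_one]; exact Matrix.mem_unitaryGroup_iff.1 hV
  -- every trace below is a sum against the doubly stochastic weights `|(Uᴴ V) i j| ^ 2`
  have e1 := trace_conj_mul_conj U V (fun i => a i * a i) (fun _ => 1)
  have e2 := trace_conj_mul_conj U V (fun _ => 1) (fun i => b i * b i)
  have e3 := trace_conj_mul_conj U V a b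
  have e4 := trace_conj_mul_conj U V (fun i => Real.exp (-a i)) (fun i => Real.exp (b i))
  have e5 := trace_conj_mul_conj U V (fun i => Real.exp (a i)) (fun i => Real.exp (-b i))
  have e6 := trace_conj_mul_conj U V (fun _ => 1) (fun _ => 1)
  rw [hV1, mul_one, ← rdiag_mul, ← mul_conj_cancel hU] at e1
  rw [hU1, one_mul, ← rdiag_mul, ← mul_conj_cancel hV] at e2
  rw [hU1, hV1, one_mul, Matrix.trace_one] at e6
  have hc : crossTrace (cng U a) (cng V b) = ((cng U (-a)) * (cng V b)).trace.re +
      ((cng U a) * (cng V (-b))).trace.re - 2 * m := by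
    rw [crossTrace, cng_inv_of_unitary hU, cng_inv_of_unitary hV, Matrix.trace_mul_comm (cng V _)]
  have hl : ‖vecEntries (V * rdiag b * Vᴴ - U * rdiag a * Uᴴ)‖ ^ 2 =
      ((U * rdiag a * Uᴴ) * (U * rdiag a * Uᴴ)).trace.re +
      ((V * rdiag b * Vᴴ) * (V * rdiag b * Vᴴ)).trace.re -
      2 * ((U * rdiag a * Uᴴ) * (V * rdiag b * Vᴴ)).trace.re := by
    rw [← trace_conjTranspose_mul_self_re, Matrix.conjTranspose_sub, conj_conjTranspose,
      conj_conjTranspose, sub_mul, mul_sub, mul_sub, Matrix.trace_sub, Matrix.trace_sub,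
      Matrix.trace_sub, Matrix.trace_mul_comm (V * rdiag b * Vᴴ) (U * rdiag a * Uᴴ)]
    simp only [Complex.sub_re]
    ring
  rw [hl, hc, e1, e2, e3]
  have e4' : ((cng U (-a)) * (cng V b)).trace.re = _ := e4
  have e5' : ((cng U a) * (cng V (-b))).trace.re = _ := e5
  rw [e4', e5']
  have e6' : (m : ℝ) = ∑ i, ∑ j, 1 * 1 * ‖(Uᴴ * V) i j‖ ^ 2 := by
    rw [← e6]; simp
  rw [e6']
  simp only [Finset.mul_sum, ← Finset.sum_add_distrib, ← Finset.sum_sub_distrib]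
  refine Finset.sum_le_sum fun i _ => Finset.sum_le_sum fun j _ => ?_
  have hk := sq_le_two_cosh (b j - a i)
  rw [Real.cosh_eq, neg_sub, sub_eq_add_neg (b j), sub_eq_add_neg (a i), Real.exp_add,
    Real.exp_add] at hk
  nlinarith [mul_le_mul_of_nonneg_right hk (sq_nonneg ‖(Uᴴ * V) i j‖)]

/-! ### The exponential metric increasing property -/

lemma two_cosh_le (x : ℝ) : 2 * Real.cosh x - 2 ≤ x ^ 2 * Real.exp (x ^ 2 / 2) := by
  have h1 := Real.cosh_le_exp_half_sq x
  have h2 := Real.one_sub_le_exp_neg (x ^ 2 / 2)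
  have h3 : Real.exp (x ^ 2 / 2) * Real.exp (-(x ^ 2 / 2)) = 1 := by
    rw [← Real.exp_add, add_neg_cancel, Real.exp_zero]
  nlinarith [mul_le_mul_of_nonneg_left h2 (Real.exp_pos (x ^ 2 / 2)).le]

lemma rdist_nonneg (P Q : Matrix (Fin m) (Fin m) ℂ) : 0 ≤ rdist P Q := Real.sqrt_nonneg _

lemma crossTrace_self {P : Matrix (Fin m) (Fin m) ℂ} (hP : P.PosDef) : crossTrace P P = 0 := by
  obtain ⟨C, z, hC, h, -⟩ := exists_simdiag hP hP
  rw [h, crossTrace_cng hC]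
  simp

/-- The geodesic from `cng C 0` to `cng C z` is cut into `N + 1` equal steps, and the cross-trace
bound is applied to each. -/
lemma norm_log_sub_log_sq_le_discrete {U V C : Matrix (Fin m) (Fin m) ℂ}
    (hU : U ∈ Matrix.unitaryGroup (Fin m) ℂ) (hV : V ∈ Matrix.unitaryGroup (Fin m) ℂ)
    (hC : IsUnit C) (a b z : Fin m → ℝ) (ha : cng U a = cng C 0) (hb : cng V b = cng C z)
    (N : ℕ) :
    ‖vecEntries (V * rdiag b * Vᴴ - U * rdiag a * Uᴴ)‖ ^ 2 ≤
      ∑ i, z i ^ 2 * Real.exp ((z i / (N + 1 : ℝ)) ^ 2 / 2) := by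
  have hN : (0 : ℝ) < N + 1 := by positivity
  have hlog : ∀ j : ℕ, ∃ W ∈ Matrix.unitaryGroup (Fin m) ℂ, ∃ c,
      cng C (fun i => j * (z i / (N + 1 : ℝ))) = cng W c :=
    fun j => exists_unitary_cng (cng_posDef hC _)
  -- `L j` is the logarithm of the `j`-th subdivision point
  choose W hW c hc using hlog
  set L : ℕ → EuclideanSpace ℂ (Fin m × Fin m) :=
    fun j => vecEntries (W j * rdiag (c j) * (W j)ᴴ) with hL
  set ε : ℝ := ∑ i, (z i / (N + 1 : ℝ)) ^ 2 * Real.exp ((z i / (N + 1 : ℝ)) ^ 2 / 2) with hε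
  have hε0 : 0 ≤ ε := Finset.sum_nonneg fun i _ => by positivity
  -- two logarithms of the same matrix coincide, by the cross-trace bound itself
  have h0 : L 0 = vecEntries (U * rdiag a * Uᴴ) := by
    have h := norm_log_sub_log_sq_le_crossTrace hU (hW 0) a (c 0)
    rw [← hc 0, ha] at h
    have e : (fun i => ((0 : ℕ) : ℝ) * (z i / (N + 1 : ℝ))) = 0 := by ext i; simp
    rw [e, crossTrace_self (cng_posDef hC _), vecEntries_sub] at h
    exact sub_eq_zero.1 (norm_eq_zero.1 (pow_eq_zero_iff two_ne_zero |>.1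
      (le_antisymm h (sq_nonneg _))))
  have h1 : L (N + 1) = vecEntries (V * rdiag b * Vᴴ) := by
    have h := norm_log_sub_log_sq_le_crossTrace hV (hW (N + 1)) b (c (N + 1))
    rw [← hc (N + 1), hb] at h
    have e : (fun i => ((N + 1 : ℕ) : ℝ) * (z i / (N + 1 : ℝ))) = z := by
      ext i; push_cast; field_simp
    rw [e, crossTrace_self (cng_posDef hC _), vecEntries_sub] at h
    exact sub_eq_zero.1 (norm_eq_zero.1 (pow_eq_zero_iff two_ne_zero |>.1
      (le_antisymm h (sq_nonneg _))))
  have hstep : ∀ j, dist (L j) (L (j + 1)) ≤ √ε := by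
    intro j
    rw [dist_comm, dist_eq_norm]
    refine Real.le_sqrt_of_sq_le ?_
    have h := norm_log_sub_log_sq_le_crossTrace (hW j) (hW (j + 1)) (c j) (c (j + 1))
    rw [← hc, ← hc, crossTrace_cng hC, vecEntries_sub] at h
    refine h.trans (Finset.sum_le_sum fun i _ => ?_)
    have e : ((j + 1 : ℕ) : ℝ) * (z i / (N + 1 : ℝ)) - j * (z i / (N + 1 : ℝ)) =
        z i / (N + 1 : ℝ) := by push_cast; ring
    rw [e]
    exact two_cosh_le _
  have htot : ‖vecEntries (V * rdiag b * Vᴴ - U * rdiag a * Uᴴ)‖ ≤ (N + 1) * √ε := by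
    rw [vecEntries_sub, ← h0, ← h1, ← dist_eq_norm, dist_comm]
    refine (dist_le_range_sum_dist L (N + 1)).trans ((Finset.sum_le_sum fun j _ => hstep j).trans ?_)
    simp
  refine (pow_le_pow_left₀ (norm_nonneg _) htot 2).trans (le_of_eq ?_)
  rw [mul_pow, Real.sq_sqrt hε0, hε, Finset.mul_sum]
  refine Finset.sum_congr rfl fun i _ => ?_
  field_simp

/-- The exponential metric increasing property: the Frobenius distance between the logarithms of two
positive definite matrices is at most their Riemannian distance. -/
theorem norm_log_sub_log_le_rdist {U V : Matrix (Fin m) (Fin m) ℂ}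
    (hU : U ∈ Matrix.unitaryGroup (Fin m) ℂ) (hV : V ∈ Matrix.unitaryGroup (Fin m) ℂ)
    (a b : Fin m → ℝ) :
    ‖vecEntries (V * rdiag b * Vᴴ - U * rdiag a * Uᴴ)‖ ^ 2 ≤
      rdist (cng U a) (cng V b) ^ 2 := by
  obtain ⟨C, z, hC, ha, hb⟩ := exists_simdiag (cng_posDef (isUnit_of_unitary hU) a)
    (cng_posDef (isUnit_of_unitary hV) b)
  have hlim : Filter.Tendsto (fun N : ℕ => ∑ i, z i ^ 2 * Real.exp ((z i / (N + 1 : ℝ)) ^ 2 / 2))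
      Filter.atTop (nhds (∑ i, z i ^ 2)) := by
    refine tendsto_finsetSum _ fun i _ => ?_
    have h1 : Filter.Tendsto (fun N : ℕ => z i * (1 / ((N : ℝ) + 1))) Filter.atTop
        (nhds (z i * 0)) := tendsto_one_div_add_atTop_nhds_zero_nat.const_mul _
    have h2 := (((Real.continuous_exp.tendsto _).comp ((h1.pow 2).div_const 2)).const_mul (z i ^ 2))
    simpa [Function.comp_def, div_eq_mul_inv] using h2
  rw [ha, hb, rdist_cng_zero hC]
  exact ge_of_tendsto' hlim fun N => norm_log_sub_log_sq_le_discrete hU hV hC a b z ha hb N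

/-! ### Metric geometry of the positive definite cone -/

lemma rdist_congr {B P Q : Matrix (Fin m) (Fin m) ℂ} (hB : IsUnit B) (hP : P.PosDef)
    (hQ : Q.PosDef) : rdist (B * P * Bᴴ) (B * Q * Bᴴ) = rdist P Q := by
  obtain ⟨C, z, hC, rfl, rfl⟩ := exists_simdiag hP hQ
  rw [← cng_mul, ← cng_mul, ← sq_eq_sq₀ (rdist_nonneg _ _) (rdist_nonneg _ _),
    rdist_cng_zero (hB.mul hC), rdist_cng_zero hC]

lemma rdist_comm {P Q : Matrix (Fin m) (Fin m) ℂ} (hP : P.PosDef) (hQ : Q.PosDef) :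
    rdist P Q = rdist Q P := by
  obtain ⟨C, z, hC, rfl, rfl⟩ := exists_simdiag hP hQ
  rw [← sq_eq_sq₀ (rdist_nonneg _ _) (rdist_nonneg _ _), rdist_cng hC, rdist_cng hC]
  refine Finset.sum_congr rfl fun i _ => ?_
  simp

lemma eq_of_rdist_eq_zero {P Q : Matrix (Fin m) (Fin m) ℂ} (hP : P.PosDef) (hQ : Q.PosDef)
    (h : rdist P Q ^ 2 ≤ 0) : P = Q := by
  obtain ⟨C, z, hC, rfl, rfl⟩ := exists_simdiag hP hQ
  rw [rdist_cng_zero hC] at h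
  have h0 := (Finset.sum_eq_zero_iff_of_nonneg (fun i _ => sq_nonneg (z i))).1
    (le_antisymm h (Finset.sum_nonneg fun i _ => sq_nonneg _))
  have : z = 0 := by ext i; simpa using h0 i (Finset.mem_univ i)
  rw [this]

lemma norm_log_sq {U : Matrix (Fin m) (Fin m) ℂ} (hU : U ∈ Matrix.unitaryGroup (Fin m) ℂ)
    (a : Fin m → ℝ) : ‖vecEntries (U * rdiag a * Uᴴ)‖ ^ 2 = ∑ i, a i ^ 2 := by
  rw [← fnorm_eq_norm, fnorm_sq_conj hU]

lemma rdist_cng_mul_unitary {C U : Matrix (Fin m) (Fin m) ℂ} (hC : IsUnit C)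
    (hU : U ∈ Matrix.unitaryGroup (Fin m) ℂ) (a : Fin m → ℝ) :
    rdist (C * Cᴴ) (cng (C * U) a) ^ 2 = ∑ i, a i ^ 2 := by
  have h : U * Uᴴ = 1 := Matrix.mem_unitaryGroup_iff.1 hU
  have e : C * Cᴴ = cng (C * U) 0 := by rw [cng_mul, cng_zero, h, mul_one]
  rw [e, rdist_cng_zero (hC.mul (isUnit_of_unitary hU))]

/-- The semiparallelogram law. The midpoint `M` is moved to the identity by congruence; then `X` and
`Y` have opposite logarithms, and the claim follows from the exponential metric increasing property
and the parallelogram law for the Frobenius norm. -/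
theorem exists_midpoint {X Y : Matrix (Fin m) (Fin m) ℂ} (hX : X.PosDef) (hY : Y.PosDef) :
    ∃ M : Matrix (Fin m) (Fin m) ℂ, M.PosDef ∧ ∀ A : Matrix (Fin m) (Fin m) ℂ, A.PosDef →
      rdist M A ^ 2 ≤ rdist X A ^ 2 / 2 + rdist Y A ^ 2 / 2 - rdist X Y ^ 2 / 4 := by
  obtain ⟨B, z, hB, rfl, rfl⟩ := exists_simdiag hX hY
  set C := B * expDiag (fun i => z i / 4) with hCdef
  have hC : IsUnit C := hB.mul (expDiag_isUnit _)
  have hXe : cng B 0 = cng C (fun i => -(z i / 2)) := by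
    rw [hCdef, cng_mul_expDiag]; congr 1; ext i; simp; ring
  have hYe : cng B z = cng C (fun i => z i / 2) := by
    rw [hCdef, cng_mul_expDiag]; congr 1; ext i; simp; ring
  refine ⟨C * Cᴴ, cng_zero C ▸ cng_posDef hC 0, fun A hA => ?_⟩
  obtain ⟨U, hU, b, rfl⟩ := exists_cng_of_isUnit hC hA
  rw [rdist_cng_mul_unitary hC hU, rdist_cng_zero hB, hXe, hYe]
  have h1 : (1 : Matrix (Fin m) (Fin m) ℂ) ∈ Matrix.unitaryGroup (Fin m) ℂ := one_mem _
  have key : ∀ s : Fin m → ℝ, ‖vecEntries (U * rdiag b * Uᴴ) - vecEntries (rdiag s)‖ ^ 2 ≤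
      rdist (cng C s) (cng (C * U) b) ^ 2 := by
    intro s
    have h := norm_log_sub_log_le_rdist h1 hU s b
    rw [← rdist_congr hC (cng_posDef isUnit_one _) (cng_posDef (isUnit_of_unitary hU) _),
      ← cng_mul, ← cng_mul, mul_one, vecEntries_sub] at h
    simpa using h
  have hneg : vecEntries (rdiag fun i => -(z i / 2)) = -vecEntries (rdiag fun i => z i / 2) := by
    ext p
    simp only [vecEntries, rdiag, PiLp.neg_apply, Matrix.diagonal_apply]
    split_ifs <;> simp
  have k1 := key (fun i => -(z i / 2))
  have k2 := key (fun i => z i / 2)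
  rw [hneg, sub_neg_eq_add] at k1
  have hp := parallelogram_law_with_norm ℂ (vecEntries (U * rdiag b * Uᴴ))
    (vecEntries (rdiag fun i => z i / 2))
  have n1 := norm_log_sq hU b
  have n2 := norm_log_sq h1 (fun i => z i / 2)
  simp only [one_mul, Matrix.conjTranspose_one, mul_one, div_pow, ← Finset.sum_div] at n2
  nlinarith

/-- The triangle inequality, from the exponential metric increasing property with `A` moved to the
identity. -/
lemma abs_rdist_sub_rdist_le {X Y A : Matrix (Fin m) (Fin m) ℂ} (hX : X.PosDef) (hY : Y.PosDef)
    (hA : A.PosDef) : |rdist X A - rdist Y A| ≤ rdist X Y := by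
  obtain ⟨C, -, hC, rfl, -⟩ := exists_simdiag hA hA
  obtain ⟨U, hU, a, rfl⟩ := exists_cng_of_isUnit hC hX
  obtain ⟨V, hV, b, rfl⟩ := exists_cng_of_isUnit hC hY
  have e : ∀ (W : Matrix (Fin m) (Fin m) ℂ) (s : Fin m → ℝ),
      W ∈ Matrix.unitaryGroup (Fin m) ℂ → (cng (C * W) s).PosDef →
      rdist (cng (C * W) s) (cng C 0) = ‖vecEntries (W * rdiag s * Wᴴ)‖ := by
    intro W s hW hp
    rw [rdist_comm hp hA, ← sq_eq_sq₀ (rdist_nonneg _ _) (norm_nonneg _), norm_log_sq hW,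
      cng_zero, rdist_cng_mul_unitary hC hW]
  rw [e U a hU hX, e V b hV hY, cng_mul, cng_mul, rdist_congr hC
    (cng_posDef (isUnit_of_unitary hU) _) (cng_posDef (isUnit_of_unitary hV) _), abs_sub_comm]
  refine (abs_norm_sub_norm_le _ _).trans ?_
  rw [← vecEntries_sub]
  exact (sq_le_sq₀ (norm_nonneg _) (rdist_nonneg _ _)).1 (norm_log_sub_log_le_rdist hU hV a b)

/-! ### Continuity and compactness -/

/-- By the triangle inequality it suffices that `rdist Y X` tends to `0` as `Y` tends to `X`, which
the continuous bound `crossTrace Y X` gives. -/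
lemma continuousOn_rdist {A : Matrix (Fin m) (Fin m) ℂ} (hA : A.PosDef) :
    ContinuousOn (fun X : Matrix (Fin m) (Fin m) ℂ => rdist X A)
      {X : Matrix (Fin m) (Fin m) ℂ | X.PosDef} := by
  intro X hX
  have hinv : ContinuousAt (fun Y : Matrix (Fin m) (Fin m) ℂ => Y⁻¹) X := by
    have hdet : X.det ≠ 0 := ((Matrix.isUnit_iff_isUnit_det _).1 hX.isUnit).ne_zero
    simp only [Matrix.inv_def, Ring.inverse_eq_inv']
    exact (continuous_id.matrix_det.continuousAt.inv₀ hdet).smul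
      continuous_id.matrix_adjugate.continuousAt
  have hct : ContinuousAt (fun Y : Matrix (Fin m) (Fin m) ℂ => crossTrace Y X) X := by
    have htr : Continuous fun Z : Matrix (Fin m) (Fin m) ℂ => Z.trace.re :=
      Complex.continuous_re.comp continuous_id.matrix_trace
    have h1 : ContinuousAt (fun Y : Matrix (Fin m) (Fin m) ℂ => Y⁻¹ * X) X :=
      hinv.mul continuousAt_const
    have h2 : ContinuousAt (fun Y : Matrix (Fin m) (Fin m) ℂ => X⁻¹ * Y) X :=
      continuousAt_const.mul continuousAt_id
    exact ((htr.continuousAt.comp h1).add (htr.continuousAt.comp h2)).sub continuousAt_const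
  have hlim : Filter.Tendsto (fun Y => √(crossTrace Y X))
      (nhdsWithin X {X : Matrix (Fin m) (Fin m) ℂ | X.PosDef}) (nhds 0) := by
    have h := (Real.continuous_sqrt.continuousAt.comp hct).tendsto
    simp only [Function.comp_def, crossTrace_self hX, Real.sqrt_zero] at h
    exact h.mono_left nhdsWithin_le_nhds
  refine tendsto_iff_dist_tendsto_zero.2 (squeeze_zero' (.of_forall fun _ => dist_nonneg) ?_ hlim)
  filter_upwards [self_mem_nhdsWithin] with Y hY
  rw [Real.dist_eq]
  exact (abs_rdist_sub_rdist_le hY hX hA).trans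
    (Real.le_sqrt_of_sq_le (rdist_sq_le_crossTrace hY hX))

lemma isCompact_unitaryGroup :
    IsCompact {U : Matrix (Fin m) (Fin m) ℂ | U ∈ Matrix.unitaryGroup (Fin m) ℂ} := by
  have hK : IsCompact (Set.univ.pi fun _ : Fin m => Set.univ.pi fun _ : Fin m =>
      Metric.closedBall (0 : ℂ) 1) :=
    isCompact_univ_pi fun _ => isCompact_univ_pi fun _ => isCompact_closedBall _ _
  refine IsCompact.of_isClosed_subset hK ?_ ?_
  · simp only [Matrix.mem_unitaryGroup_iff]
    exact isClosed_eq (continuous_id.mul continuous_star) continuous_const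
  · intro U hU i _ j _
    simpa using entry_norm_bound_of_unitary hU i j

/-- Closed balls of the Riemannian metric lie in compact sets of positive definite matrices, namely
images of the product of the unitary group and a cube of exponents. -/
lemma exists_compact_ball {A : Matrix (Fin m) (Fin m) ℂ} (hA : A.PosDef) (r : ℝ) :
    ∃ K : Set (Matrix (Fin m) (Fin m) ℂ), IsCompact K ∧ (∀ X ∈ K, X.PosDef) ∧
      ∀ X : Matrix (Fin m) (Fin m) ℂ, X.PosDef → rdist X A ≤ r → X ∈ K := by
  obtain ⟨C, -, hC, hAC, -⟩ := exists_simdiag hA hA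
  have hcont : Continuous fun p : Matrix (Fin m) (Fin m) ℂ × (Fin m → ℝ) => cng (C * p.1) p.2 := by
    have h1 : Continuous fun p : Matrix (Fin m) (Fin m) ℂ × (Fin m → ℝ) => C * p.1 :=
      continuous_const.mul continuous_fst
    have h2 : Continuous fun p : Matrix (Fin m) (Fin m) ℂ × (Fin m → ℝ) => expDiag p.2 := by
      refine Continuous.matrix_diagonal (continuous_pi fun i => ?_)
      exact Complex.continuous_ofReal.comp
        (Real.continuous_exp.comp ((continuous_apply i).comp continuous_snd))
    exact (h1.mul h2).mul h1.star
  refine ⟨_, (isCompact_unitaryGroup.prod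
    (isCompact_univ_pi fun _ : Fin m => isCompact_Icc (a := -r) (b := r))).image hcont, ?_, ?_⟩
  · rintro _ ⟨⟨U, z⟩, ⟨hU, -⟩, rfl⟩
    exact cng_posDef (hC.mul (isUnit_of_unitary hU)) z
  · intro X hX hXr
    have hr : 0 ≤ r := (rdist_nonneg _ _).trans hXr
    obtain ⟨U, hU, z, rfl⟩ := exists_cng_of_isUnit hC hX
    refine ⟨(U, z), ⟨hU, fun i _ => ?_⟩, rfl⟩
    have h : ∑ i, z i ^ 2 ≤ r ^ 2 := by
      rw [← rdist_cng_mul_unitary hC hU, ← cng_zero, ← hAC, rdist_comm hA hX]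
      exact pow_le_pow_left₀ (rdist_nonneg _ _) hXr 2
    exact abs_le.1 (abs_le_of_sq_le_sq ((Finset.single_le_sum (f := fun i => z i ^ 2)
      (fun i _ => sq_nonneg _) (Finset.mem_univ i)).trans h) hr)

end

/-! ### The least squares mean -/

/-- Existence and uniqueness of the weighted least squares mean: the function
`F(X) = Σᵢ wᵢ δ²(X, Aᵢ)` attains its minimum over the positive definite matrices at exactly
one point. -/
theorem least_squares_mean_exists_unique {m n : ℕ} (A : Fin n → Matrix (Fin m) (Fin m) ℂ)
    (hA : ∀ i, (A i).PosDef) (w : Fin n → ℝ) (hw : ∀ i, 0 < w i) (hw1 : ∑ i, w i = 1) :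
    ∃! X : Matrix (Fin m) (Fin m) ℂ, X.PosDef ∧
      ∀ Y : Matrix (Fin m) (Fin m) ℂ, Y.PosDef →
        ∑ i, w i * rdist X (A i) ^ 2 ≤ ∑ i, w i * rdist Y (A i) ^ 2 := by
  have hne : ∃ i0 : Fin n, True := by
    by_contra h
    push Not at h
    have : ∑ i, w i = 0 := Finset.sum_eq_zero fun i _ => (h i).elim
    linarith
  obtain ⟨i0, -⟩ := hne
  set F : Matrix (Fin m) (Fin m) ℂ → ℝ := fun X => ∑ i, w i * rdist X (A i) ^ 2 with hF
  have hex : ∃ X : Matrix (Fin m) (Fin m) ℂ, X.PosDef ∧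
      ∀ Y : Matrix (Fin m) (Fin m) ℂ, Y.PosDef → F X ≤ F Y := by
    have hbound : ∀ X, w i0 * rdist X (A i0) ^ 2 ≤ F X := fun X =>
      Finset.single_le_sum (f := fun i => w i * rdist X (A i) ^ 2)
        (fun i _ => mul_nonneg (hw i).le (sq_nonneg _)) (Finset.mem_univ i0)
    obtain ⟨K, hK, hKp, hKmem⟩ := exists_compact_ball (hA i0) (√(F (A i0) / w i0))
    have hmem : ∀ X : Matrix (Fin m) (Fin m) ℂ, X.PosDef → F X ≤ F (A i0) → X ∈ K := by
      intro X hX hle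
      refine hKmem X hX (Real.le_sqrt_of_sq_le ?_)
      rw [le_div_iff₀ (hw i0), mul_comm]
      exact (hbound X).trans hle
    have hcont : ContinuousOn F K :=
      continuousOn_finsetSum _ fun i _ =>
        continuousOn_const.mul (((continuousOn_rdist (hA i)).mono hKp).pow 2)
    have hA0 : A i0 ∈ K := hmem _ (hA i0) le_rfl
    obtain ⟨X, hXK, hXmin⟩ := hK.exists_isMinOn ⟨_, hA0⟩ hcont
    refine ⟨X, hKp X hXK, fun Y hY => ?_⟩
    rcases le_total (F Y) (F (A i0)) with h | h
    · exact hXmin (hmem Y hY h)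
    · exact (hXmin hA0).trans h
  obtain ⟨X, hX, hXmin⟩ := hex
  refine ⟨X, ⟨hX, hXmin⟩, ?_⟩
  rintro Y ⟨hY, hYmin⟩
  -- the midpoint of two minimizers would have a smaller value unless they coincide
  obtain ⟨M, hM, hMle⟩ := exists_midpoint hY hX
  have hFM : F M ≤ F Y / 2 + F X / 2 - rdist Y X ^ 2 / 4 := by
    calc F M ≤ ∑ i, w i * (rdist Y (A i) ^ 2 / 2 + rdist X (A i) ^ 2 / 2 - rdist Y X ^ 2 / 4) :=
          Finset.sum_le_sum fun i _ => mul_le_mul_of_nonneg_left (hMle _ (hA i)) (hw i).le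
      _ = F Y / 2 + F X / 2 - (∑ i, w i) * (rdist Y X ^ 2 / 4) := by
          rw [hF, Finset.sum_div, Finset.sum_div, Finset.sum_mul, ← Finset.sum_add_distrib,
            ← Finset.sum_sub_distrib]
          exact Finset.sum_congr rfl fun i _ => by ring
      _ = _ := by rw [hw1, one_mul]
  have h1 : F X ≤ F M := hXmin M hM
  have h2 : F Y ≤ F M := hYmin M hM
  exact eq_of_rdist_eq_zero hY hX (by linarith)
end

section
/- (Monotonicity of the least squares mean) Let A₁, …, Aₙ and B₁, …, Bₙ be m×m positive definite complex matrices with Aᵢ ≤ Bᵢ in the Loewner order for all i, and let w = (w₁, …, wₙ) be a weight (wᵢ > 0, Σᵢ wᵢ = 1). If X is the unique minimizer over positive definite matrices of Y ↦ Σᵢ wᵢ δ²(Y, Aᵢ) and Z is the unique minimizer of Y ↦ Σᵢ wᵢ δ²(Y, Bᵢ), then X ≤ Z in the Loewner order. -/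
/-!
The proof characterises the minimisers by their Karcher equations and then compares the solutions
of two such equations in the Loewner order.

*Karcher equation.* Let `X` minimise `∑ wᵢ δ²(Y, Aᵢ)`, put `Mᵢ = X^{-1/2} Aᵢ X^{-1/2}` and
`L = ∑ wᵢ log Mᵢ`. Along `Y(s) = X^{1/2} e^{-2sL} X^{1/2}` one has
`δ²(Y(s), Aᵢ) = Tr log² Nᵢ` with `Nᵢ = e^{sL} Mᵢ e^{sL}`. The objective is not differentiated
directly: the scalar inequality `sq_log_majorant` bounds `log² μ` by an affine combination of `μ`
and `μ⁻¹` which touches it to first order, and Klein's argument (`trace_sq_log_le`) turns this into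
an upper bound of `Tr log² Nᵢ` by an affine function of `Nᵢ` and `Nᵢ⁻¹`. The resulting majorant of
the increment of the objective is differentiable in `s`, nonnegative, and zero at `s = 0`, so its
derivative `4 Tr L²` there vanishes and `L = 0` (`karcher_of_min`).

*Comparison.* Let `X #_t A` be the weighted geometric mean, monotone in both arguments for
`t ∈ [0, 1]` and homogeneous of degree `1 - t` in `X`. From `aᵗ ≥ 1 + t log a` and the Karcher
equation, `X ≤ ∑ wᵢ (X #_t Aᵢ)`; from `aᵗ ≤ 1 + t log a + t ε` for small `t > 0`,
`∑ wᵢ (Z #_t Bᵢ) ≤ (1 + t ε) Z`. If `r` is the least number with `X ≤ r Z`, then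
`X ≤ ∑ wᵢ (r Z #_t Bᵢ) ≤ r^{1-t} (1 + t ε) Z`, whence `r ≤ r^{1-t} (1 + t ε)`. If `r > 1`, taking
`ε = log r / 2` contradicts `rᵗ ≥ 1 + t log r`; hence `r ≤ 1` and `X ≤ Z` (`karcher_mono`).
-/

open Matrix
open scoped ComplexOrder

/-! ### Weighted geometric means and comparison of Karcher equations -/

section CStar

variable {𝒜 : Type*} [CStarAlgebra 𝒜] [PartialOrder 𝒜] [StarOrderedRing 𝒜]

/-- The weighted geometric mean `X #_t A` in a C⋆-algebra. -/
noncomputable def geo (t : ℝ) (X A : 𝒜) : 𝒜 :=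
  X ^ (1 / 2 : ℝ) * (X ^ (-(1 / 2) : ℝ) * A * X ^ (-(1 / 2) : ℝ)) ^ t * X ^ (1 / 2 : ℝ)

lemma rpow_half_mul_self {X : 𝒜} (hX : IsStrictlyPositive X) :
    X ^ (1 / 2 : ℝ) * X ^ (1 / 2 : ℝ) = X := by
  rw [← CFC.rpow_add hX.isUnit]
  norm_num
  exact CFC.rpow_one X hX.nonneg

lemma rpow_conj_strictPos {X A : 𝒜} (hX : IsStrictlyPositive X) (hA : IsStrictlyPositive A)
    (s : ℝ) : IsStrictlyPositive (X ^ s * A * X ^ s) := by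
  have h := IsStrictlyPositive.rpow X s hX
  exact IsStrictlyPositive.conjugate_of_isUnit_of_isSelfAdjoint _ _ h.isUnit h.isSelfAdjoint hA

lemma rpow_conj_mono {X A B : 𝒜} (h : A ≤ B) (s : ℝ) :
    X ^ s * A * X ^ s ≤ X ^ s * B * X ^ s :=
  conjugate_le_conjugate_of_nonneg h CFC.rpow_nonneg

lemma unitary_conj_rpow {u a : 𝒜} (hu : u ∈ unitary 𝒜) (ha : IsStrictlyPositive a) (s : ℝ) :
    (u * a * star u) ^ s = u * a ^ s * star u := by
  have h1 : IsStrictlyPositive (u * a * star u) :=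
    (IsUnit.isStrictlyPositive_star_right_conjugate_iff
      (Unitary.isUnit_coe (U := ⟨u, hu⟩))).2 ha
  rw [CFC.rpow_eq_cfc_real h1.nonneg, CFC.rpow_eq_cfc_real ha.nonneg]
  have hc : ContinuousOn (fun x : ℝ => x ^ s) (spectrum ℝ a) := fun x hx =>
    (Real.continuousAt_rpow_const _ _ (Or.inl (ha.spectrum_pos hx).ne')).continuousWithinAt
  have := StarAlgHomClass.map_cfc (S := ℂ) (Unitary.conjStarAlgAut ℂ 𝒜 ⟨u, hu⟩)
    (fun x : ℝ => x ^ s) a hc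
    (by
      have : Continuous (fun x => u * x * star u) := by fun_prop
      exact this) ha.isSelfAdjoint h1.isSelfAdjoint
  simpa using this.symm

lemma smul_rpow_of_pos {a : 𝒜} (ha : IsStrictlyPositive a) {r : ℝ} (hr : 0 < r) (s : ℝ) :
    (r • a) ^ s = r ^ s • a ^ s := by
  have hc : ContinuousOn (fun x : ℝ => x ^ s) (spectrum ℝ a) := fun x hx =>
    (Real.continuousAt_rpow_const _ _ (Or.inl (ha.spectrum_pos hx).ne')).continuousWithinAt
  have h1 : r • a = cfc (fun x : ℝ => r • x) a := by
    rw [cfc_smul r (fun x : ℝ => x) a, cfc_id' ℝ a ha.isSelfAdjoint]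
  rw [h1, CFC.cfc_rpow (fun x hx => by simpa using mul_pos hr (ha.spectrum_pos hx))
    (by fun_prop) ha.isSelfAdjoint, CFC.rpow_eq_cfc_real ha.nonneg, ← cfc_smul _ _ _ hc]
  refine cfc_congr fun x hx => ?_
  simp [Real.mul_rpow hr.le (ha.spectrum_pos hx).le]

/-- `X #_t A = A #_{1-t} X`. With `M = X^{-1/2} A X^{-1/2}`, the element
`u = A^{-1/2} X^{1/2} M^{1/2}` is unitary and `A^{-1/2} X A^{-1/2} = u M⁻¹ u*`, so powers of the
latter are computed from powers of `M`. -/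
lemma geo_swap {X A : 𝒜} (hX : IsStrictlyPositive X) (hA : IsStrictlyPositive A) (t : ℝ) :
    geo t X A = geo (1 - t) A X := by
  unfold geo
  have hM := rpow_conj_strictPos hX hA (-(1 / 2))
  set M := X ^ (-(1 / 2) : ℝ) * A * X ^ (-(1 / 2) : ℝ) with hMdef
  set h := X ^ (1 / 2 : ℝ) with hh
  set h' := X ^ (-(1 / 2) : ℝ) with hh'
  set k := A ^ (1 / 2 : ℝ) with hk
  set k' := A ^ (-(1 / 2) : ℝ) with hk'
  set q := M ^ (1 / 2 : ℝ) with hq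
  set q' := M ^ (-(1 / 2) : ℝ) with hq'
  have e1 : h * h' = 1 := CFC.rpow_mul_rpow_neg _ hX
  have e2 : h' * h = 1 := CFC.rpow_neg_mul_rpow _ hX
  have e3 : k * k' = 1 := CFC.rpow_mul_rpow_neg _ hA
  have e4 : k' * k = 1 := CFC.rpow_neg_mul_rpow _ hA
  have e5 : q' * q = 1 := CFC.rpow_neg_mul_rpow _ hM
  have e6 : q * q = M := rpow_half_mul_self hM
  have e7 : k * k = A := rpow_half_mul_self hA
  have e8 : h * h = X := rpow_half_mul_self hX
  have hXM : h * M * h = A := by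
    calc h * M * h = (h * h') * A * (h' * h) := by rw [hMdef]; noncomm_ring
      _ = A := by rw [e1, e2]; simp
  have sh : star h = h := (CFC.rpow_nonneg (a := X)).isSelfAdjoint
  have sk' : star k' = k' := (CFC.rpow_nonneg (a := A)).isSelfAdjoint
  have sq : star q = q := (CFC.rpow_nonneg (a := M)).isSelfAdjoint
  have su : star (k' * h * q) = q * h * k' := by simp [sh, sk', sq, mul_assoc]
  have u1 : (k' * h * q) * star (k' * h * q) = 1 := by
    rw [su]
    calc k' * h * q * (q * h * k') = k' * (h * (q * q) * h) * k' := by noncomm_ring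
      _ = (k' * k) * (k * k') := by rw [e6, hXM, ← e7]; noncomm_ring
      _ = 1 := by rw [e3, e4, one_mul]
  have u2 : star (k' * h * q) * (k' * h * q) = 1 := by
    have l : (q' * h' * k) * (k' * h * q) = 1 := by
      calc (q' * h' * k) * (k' * h * q) = q' * (h' * (k * k') * h) * q := by noncomm_ring
        _ = 1 := by rw [e3, mul_one, e2, mul_one, e5]
    rw [← left_inv_eq_right_inv l u1, l]
  have hu : k' * h * q ∈ unitary 𝒜 := Unitary.mem_iff.2 ⟨u2, u1⟩
  have m1 : q * M ^ (-1 : ℝ) * q = 1 := by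
    rw [hq, ← CFC.rpow_add hM.isUnit, ← CFC.rpow_add hM.isUnit]
    norm_num
    exact CFC.rpow_zero M hM.nonneg
  have hT : k' * X * k' = (k' * h * q) * M ^ (-1 : ℝ) * star (k' * h * q) := by
    rw [su]
    calc k' * X * k' = k' * h * 1 * h * k' := by rw [← e8]; noncomm_ring
      _ = _ := by rw [← m1]; noncomm_ring
  rw [hT, unitary_conj_rpow hu (IsStrictlyPositive.rpow _ _ hM), su,
    CFC.rpow_rpow M _ _ (by norm_num) hM]
  have m2 : q * M ^ (-1 * (1 - t)) * q = M ^ t := by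
    rw [hq, ← CFC.rpow_add hM.isUnit, ← CFC.rpow_add hM.isUnit]
    congr 1; ring
  calc h * M ^ t * h = (k * k') * h * M ^ t * h * (k' * k) := by rw [e3, e4]; simp
    _ = _ := by rw [← m2]; noncomm_ring

lemma geo_mono_right {X A B : 𝒜} (h : A ≤ B) {t : ℝ} (ht : t ∈ Set.Icc (0 : ℝ) 1) :
    geo t X A ≤ geo t X B :=
  rpow_conj_mono (CFC.rpow_le_rpow ht (rpow_conj_mono h _)) _

lemma geo_mono_left {X Z A : 𝒜} (hX : IsStrictlyPositive X) (hZ : IsStrictlyPositive Z)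
    (hA : IsStrictlyPositive A) (h : X ≤ Z) {t : ℝ} (ht : t ∈ Set.Icc (0 : ℝ) 1) :
    geo t X A ≤ geo t Z A := by
  rw [geo_swap hX hA, geo_swap hZ hA]
  exact geo_mono_right h ⟨by linarith [ht.2], by linarith [ht.1]⟩

lemma geo_smul_left {X A : 𝒜} (hX : IsStrictlyPositive X) (hA : IsStrictlyPositive A)
    {r : ℝ} (hr : 0 < r) (t : ℝ) : geo t (r • X) A = r ^ (1 - t) • geo t X A := by
  rw [geo_swap (hX.smul hr) hA, geo_swap hX hA]
  unfold geo
  rw [mul_smul_comm, smul_mul_assoc, smul_rpow_of_pos (rpow_conj_strictPos hA hX _) hr,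
    mul_smul_comm, smul_mul_assoc]

lemma one_add_smul_log_le_rpow {a : 𝒜} (ha : IsStrictlyPositive a) (t : ℝ) :
    1 + t • CFC.log a ≤ a ^ t := by
  have hc : ContinuousOn (fun x : ℝ => x ^ t) (spectrum ℝ a) := fun x hx =>
    (Real.continuousAt_rpow_const _ _ (Or.inl (ha.spectrum_pos hx).ne')).continuousWithinAt
  have hl : ContinuousOn Real.log (spectrum ℝ a) := fun x hx =>
    (Real.continuousAt_log (ha.spectrum_pos hx).ne').continuousWithinAt
  have hs := ha.isSelfAdjoint
  have e : 1 + t • CFC.log a = cfc (fun x : ℝ => 1 + t • Real.log x) a := by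
    rw [cfc_const_add 1 (fun x : ℝ => t • Real.log x) a (hl.const_smul t) hs,
      cfc_smul t Real.log a hl, CFC.log, map_one]
  rw [e, CFC.rpow_eq_cfc_real ha.nonneg]
  refine cfc_mono (fun x hx => ?_) (continuousOn_const.add (hl.const_smul t)) hc
  rw [Real.rpow_def_of_pos (ha.spectrum_pos hx), smul_eq_mul]
  linarith [Real.add_one_le_exp (Real.log x * t)]

/-- The upper half of the expansion `aᵗ = 1 + t log a + o(t)` in the order, as `t → 0⁺`. -/
lemma eventually_rpow_le {a : 𝒜} (ha : IsStrictlyPositive a) {ε : ℝ} (hε : 0 < ε) :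
    ∀ᶠ t : ℝ in nhdsWithin 0 (Set.Ioi 0), a ^ t ≤ 1 + t • CFC.log a + (t * ε) • 1 := by
  have h := CFC.tendsto_cfc_rpow_sub_one_log ha
  have h2 := (Metric.tendsto_nhds.1 h) ε hε
  filter_upwards [h2, self_mem_nhdsWithin] with t ht htpos
  have htpos : 0 < t := htpos
  have hc : ContinuousOn (fun x : ℝ => x ^ t) (spectrum ℝ a) := fun x hx =>
    (Real.continuousAt_rpow_const _ _ (Or.inl (ha.spectrum_pos hx).ne')).continuousWithinAt
  have hs := ha.isSelfAdjoint
  have e : cfc (fun x : ℝ => t⁻¹ * (x ^ t - 1)) a = t⁻¹ • (a ^ t - 1) := by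
    simp only [← smul_eq_mul]
    rw [cfc_smul _ (fun x : ℝ => x ^ t - 1) a (hc.sub continuousOn_const),
      cfc_sub _ _ a hc continuousOn_const, cfc_const_one .., CFC.rpow_eq_cfc_real ha.nonneg]
  rw [e, dist_eq_norm] at ht
  set D := t⁻¹ • (a ^ t - 1) - CFC.log a with hD
  have hDs : IsSelfAdjoint D := by
    have h1 : IsSelfAdjoint (a ^ t) := (CFC.rpow_nonneg (a := a)).isSelfAdjoint
    have h2 : IsSelfAdjoint (t⁻¹ • (a ^ t - 1)) :=
      IsSelfAdjoint.smul (by simp [IsSelfAdjoint]) (h1.sub (.one 𝒜))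
    exact h2.sub IsSelfAdjoint.log
  have hle : D ≤ ε • (1 : 𝒜) := by
    refine (IsSelfAdjoint.le_algebraMap_norm_self hDs).trans ?_
    rw [Algebra.algebraMap_eq_smul_one]
    exact smul_le_smul_of_nonneg_right ht.le zero_le_one
  have h3 : t • D ≤ t • ε • (1 : 𝒜) := smul_le_smul_of_nonneg_left hle htpos.le
  have h4 : t • D = a ^ t - 1 - t • CFC.log a := by
    rw [hD, smul_sub, smul_smul, mul_inv_cancel₀ htpos.ne', one_smul]
  rw [h4, sub_le_iff_le_add, sub_le_iff_le_add] at h3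
  refine h3.trans (le_of_eq ?_)
  rw [smul_smul]; abel

/-- The solution of the Karcher equation is monotone in the data: `X` and `Z` solve the equations
for the families `A ≤ B`. -/
theorem karcher_mono {n : ℕ} {A B : Fin n → 𝒜} (hA : ∀ i, IsStrictlyPositive (A i))
    (hB : ∀ i, IsStrictlyPositive (B i)) (hAB : ∀ i, A i ≤ B i)
    {w : Fin n → ℝ} (hw : ∀ i, 0 < w i) (hw1 : ∑ i, w i = 1) {X Z : 𝒜}
    (hX : IsStrictlyPositive X) (hZ : IsStrictlyPositive Z)
    (hXK : ∑ i, w i • CFC.log (X ^ (-(1 / 2) : ℝ) * A i * X ^ (-(1 / 2) : ℝ)) = 0)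
    (hZK : ∑ i, w i • CFC.log (Z ^ (-(1 / 2) : ℝ) * B i * Z ^ (-(1 / 2) : ℝ)) = 0) :
    X ≤ Z := by
  have hconj : ∀ Y : 𝒜, Z ^ (1 / 2 : ℝ) * (Z ^ (-(1 / 2) : ℝ) * Y * Z ^ (-(1 / 2) : ℝ)) *
      Z ^ (1 / 2 : ℝ) = Y := fun Y => by
    calc _ = (Z ^ (1 / 2 : ℝ) * Z ^ (-(1 / 2) : ℝ)) * Y *
        (Z ^ (-(1 / 2) : ℝ) * Z ^ (1 / 2 : ℝ)) := by noncomm_ring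
      _ = Y := by rw [CFC.rpow_mul_rpow_neg _ hZ, CFC.rpow_neg_mul_rpow _ hZ]; simp
  have hWnn : 0 ≤ Z ^ (-(1 / 2) : ℝ) * X * Z ^ (-(1 / 2) : ℝ) :=
    (rpow_conj_strictPos hZ hX _).nonneg
  -- the norm of `Z^{-1/2} X Z^{-1/2}` is the least `r ≥ 0` with `X ≤ r Z`
  have key : ∀ r : ℝ, 0 ≤ r → (‖Z ^ (-(1 / 2) : ℝ) * X * Z ^ (-(1 / 2) : ℝ)‖ ≤ r ↔ X ≤ r • Z) := by
    intro r hr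
    rw [CStarAlgebra.norm_le_iff_le_algebraMap _ hr hWnn, Algebra.algebraMap_eq_smul_one]
    constructor
    · intro h
      have := rpow_conj_mono (X := Z) h (1 / 2)
      rwa [hconj, mul_smul_comm, mul_one, smul_mul_assoc, rpow_half_mul_self hZ] at this
    · intro h
      refine (rpow_conj_mono (X := Z) h (-(1 / 2))).trans (le_of_eq ?_)
      rw [mul_smul_comm, smul_mul_assoc]
      congr 1
      nth_rw 2 [← rpow_half_mul_self hZ]
      calc _ = (Z ^ (-(1 / 2) : ℝ) * Z ^ (1 / 2 : ℝ)) *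
          (Z ^ (1 / 2 : ℝ) * Z ^ (-(1 / 2) : ℝ)) := by noncomm_ring
        _ = 1 := by rw [CFC.rpow_mul_rpow_neg _ hZ, CFC.rpow_neg_mul_rpow _ hZ, one_mul]
  set r := ‖Z ^ (-(1 / 2) : ℝ) * X * Z ^ (-(1 / 2) : ℝ)‖ with hr
  by_cases hr1 : r ≤ 1
  · simpa using (key 1 zero_le_one).1 hr1
  exfalso
  push Not at hr1
  have hr0 : 0 < r := by linarith
  have hXr : X ≤ r • Z := (key r hr0.le).1 le_rfl
  have hlog : 0 < Real.log r := Real.log_pos hr1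
  set ε := Real.log r / 2 with hε
  have hε0 : 0 < ε := by positivity
  have hev := (Filter.eventually_all (ι := Fin n)).2 fun i =>
    eventually_rpow_le (rpow_conj_strictPos hZ (hB i) (-(1 / 2))) hε0
  have hlt : ∀ᶠ t : ℝ in nhdsWithin 0 (Set.Ioi 0), t < 1 :=
    nhdsWithin_le_nhds (Iio_mem_nhds one_pos)
  obtain ⟨t, ⟨ht, ht1⟩, ht0⟩ := ((hev.and hlt).and self_mem_nhdsWithin).exists
  have ht0 : 0 < t := ht0
  have htI : t ∈ Set.Icc (0 : ℝ) 1 := ⟨ht0.le, ht1.le⟩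
  -- `X ≤ ∑ wᵢ X #_t Aᵢ`, because the Karcher equation kills the first-order term
  have lower : X ≤ ∑ i, w i • geo t X (A i) := by
    have h1 : (1 : 𝒜) ≤ ∑ i, w i • (X ^ (-(1 / 2) : ℝ) * A i * X ^ (-(1 / 2) : ℝ)) ^ t := by
      calc (1 : 𝒜) = ∑ i, w i •
            (1 + t • CFC.log (X ^ (-(1 / 2) : ℝ) * A i * X ^ (-(1 / 2) : ℝ))) := by
            simp only [smul_add, Finset.sum_add_distrib, ← Finset.sum_smul, hw1, one_smul,
              smul_comm _ t, ← Finset.smul_sum, hXK, smul_zero, add_zero]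
        _ ≤ _ := Finset.sum_le_sum fun i _ => smul_le_smul_of_nonneg_left
            (one_add_smul_log_le_rpow (rpow_conj_strictPos hX (hA i) _) t) (hw i).le
    have h2 := rpow_conj_mono (X := X) h1 (1 / 2)
    rw [mul_one, rpow_half_mul_self hX, Finset.mul_sum, Finset.sum_mul] at h2
    simpa only [geo, mul_smul_comm, smul_mul_assoc] using h2
  -- the same with the reverse inequality, up to an error of order `t ε`
  have upper : ∑ i, w i • geo t Z (B i) ≤ (1 + t * ε) • Z := by
    have h1 : ∑ i, w i • (Z ^ (-(1 / 2) : ℝ) * B i * Z ^ (-(1 / 2) : ℝ)) ^ t ≤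
        (1 + t * ε) • (1 : 𝒜) := by
      calc _ ≤ ∑ i, w i • (1 + t • CFC.log (Z ^ (-(1 / 2) : ℝ) * B i * Z ^ (-(1 / 2) : ℝ)) +
            (t * ε) • (1 : 𝒜)) := Finset.sum_le_sum fun i _ =>
              smul_le_smul_of_nonneg_left (ht i) (hw i).le
        _ = (1 + t * ε) • (1 : 𝒜) := by
            simp only [smul_add, Finset.sum_add_distrib, ← Finset.sum_smul, hw1, one_smul,
              smul_comm _ t, ← Finset.smul_sum, hZK, smul_zero, add_zero, add_smul]
    have h2 := rpow_conj_mono (X := Z) h1 (1 / 2)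
    rw [mul_smul_comm, mul_one, smul_mul_assoc, rpow_half_mul_self hZ, Finset.mul_sum,
      Finset.sum_mul] at h2
    simpa only [geo, mul_smul_comm, smul_mul_assoc] using h2
  have chain : X ≤ (r ^ (1 - t) * (1 + t * ε)) • Z := by
    calc X ≤ ∑ i, w i • geo t X (A i) := lower
      _ ≤ ∑ i, w i • geo t (r • Z) (B i) := Finset.sum_le_sum fun i _ =>
          smul_le_smul_of_nonneg_left
            ((geo_mono_left hX (hZ.smul hr0) (hA i) hXr htI).trans
              (geo_mono_right (hAB i) htI)) (hw i).le
      _ = r ^ (1 - t) • ∑ i, w i • geo t Z (B i) := by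
          simp only [geo_smul_left hZ (hB _) hr0, smul_comm _ (r ^ (1 - t)), ← Finset.smul_sum]
      _ ≤ _ := by
          rw [mul_smul]
          exact smul_le_smul_of_nonneg_left upper (by positivity)
  have hle : r ≤ r ^ (1 - t) * (1 + t * ε) := (key _ (by positivity)).2 chain
  -- division by `r ^ (1 - t)` gives `r ^ t ≤ 1 + t ε` with `ε = log r / 2`, against
  -- `1 + t log r ≤ r ^ t`
  have h1 : r ^ t ≤ 1 + t * ε := by
    have h2 : r = r ^ (1 - t) * r ^ t := by
      rw [← Real.rpow_add hr0]; norm_num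
    have h3 : 0 < r ^ (1 - t) := by positivity
    rw [h2] at hle
    exact le_of_mul_le_mul_left (by rwa [← h2] at hle ⊢) h3
  have h4 : 1 + t * Real.log r ≤ r ^ t := by
    rw [Real.rpow_def_of_pos hr0]
    linarith [Real.add_one_le_exp (Real.log r * t)]
  nlinarith

end CStar

/-! ### The functional calculus of matrices and the Karcher equation -/

section MatrixPart

open scoped MatrixOrder Matrix.Norms.L2Operator

variable {m : ℕ}

lemma continuousOn_real_spectrum (M : Matrix (Fin m) (Fin m) ℂ) (f : ℝ → ℝ) :
    ContinuousOn f (spectrum ℝ M) :=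
  Matrix.finite_real_spectrum.continuousOn f

lemma matFun_eq_cfc {A : Matrix (Fin m) (Fin m) ℂ} (hA : A.IsHermitian) (f : ℝ → ℝ) :
    matFun f A = cfc f A := by
  rw [matFun, dif_pos hA, hA.cfc_eq, Matrix.IsHermitian.cfc, Unitary.conjStarAlgAut_apply]
  rfl

lemma cfc_mul_cfc (M : Matrix (Fin m) (Fin m) ℂ) (f g : ℝ → ℝ) :
    cfc f M * cfc g M = cfc (fun x => f x * g x) M :=
  (cfc_mul f g M (continuousOn_real_spectrum M f) (continuousOn_real_spectrum M g)).symm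

lemma cfc_inv_eq {M M' : Matrix (Fin m) (Fin m) ℂ} (hM : M.PosDef) (h : M * M' = 1) :
    cfc (fun x : ℝ => x⁻¹) M = M' := by
  have hs := isStrictlyPositive_iff_posDef.2 hM
  have h1 : cfc (fun x : ℝ => x⁻¹) M * M = 1 := by
    nth_rw 2 [← cfc_id' ℝ M hs.isSelfAdjoint]
    rw [cfc_mul_cfc, ← cfc_const_one ℝ M hs.isSelfAdjoint]
    exact cfc_congr fun x hx => inv_mul_cancel₀ (hs.spectrum_pos hx).ne'
  exact left_inv_eq_right_inv h1 h

lemma msqrt_eq_rpow {X : Matrix (Fin m) (Fin m) ℂ} (hX : X.PosDef) :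
    msqrt X = X ^ (1 / 2 : ℝ) := by
  rw [msqrt, matFun_eq_cfc hX.isHermitian,
    CFC.rpow_eq_cfc_real (isStrictlyPositive_iff_posDef.2 hX).nonneg]
  exact cfc_congr fun x _ => Real.sqrt_eq_rpow x

lemma msqrt_inv_eq_rpow {X : Matrix (Fin m) (Fin m) ℂ} (hX : X.PosDef) :
    (msqrt X)⁻¹ = X ^ (-(1 / 2) : ℝ) := by
  rw [msqrt_eq_rpow hX]
  exact Matrix.inv_eq_right_inv (CFC.rpow_mul_rpow_neg _ (isStrictlyPositive_iff_posDef.2 hX))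

/-- Spectral form of `Tr p(A) q(M)`: the weights are the squared moduli of the entries of the
change of basis between the eigenbases, hence nonnegative and independent of `p` and `q`. -/
lemma exists_trace_weights {A M : Matrix (Fin m) (Fin m) ℂ} (hA : A.IsHermitian)
    (hM : M.IsHermitian) : ∃ c : Fin m → Fin m → ℝ, (∀ j k, 0 ≤ c j k) ∧
      ∀ p q : ℝ → ℝ, (cfc p A * cfc q M).trace.re =
        ∑ j, ∑ k, p (hA.eigenvalues j) * q (hM.eigenvalues k) * c j k := by
  set U := (hA.eigenvectorUnitary : Matrix (Fin m) (Fin m) ℂ)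
  set V := (hM.eigenvectorUnitary : Matrix (Fin m) (Fin m) ℂ)
  refine ⟨fun j k => Complex.normSq ((star U * V) j k), fun j k => Complex.normSq_nonneg _, ?_⟩
  intro p q
  rw [hA.cfc_eq, hM.cfc_eq, Matrix.IsHermitian.cfc, Matrix.IsHermitian.cfc,
    Unitary.conjStarAlgAut_apply, Unitary.conjStarAlgAut_apply]
  change (U * diagonal _ * star U * (V * diagonal _ * star V)).trace.re = _
  rw [show U * diagonal (RCLike.ofReal ∘ p ∘ hA.eigenvalues) * star U *
      (V * diagonal (RCLike.ofReal ∘ q ∘ hM.eigenvalues) * star V) =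
      U * (diagonal (RCLike.ofReal ∘ p ∘ hA.eigenvalues) * ((star U * V) *
      diagonal (RCLike.ofReal ∘ q ∘ hM.eigenvalues)) * star V) by noncomm_ring,
    Matrix.trace_mul_comm]
  have hst : star (star U * V) = star V * U := by simp
  rw [show diagonal (RCLike.ofReal ∘ p ∘ hA.eigenvalues) * ((star U * V) *
      diagonal (RCLike.ofReal ∘ q ∘ hM.eigenvalues)) * star V * U =
      (diagonal (RCLike.ofReal ∘ p ∘ hA.eigenvalues) * ((star U * V) *
      diagonal (RCLike.ofReal ∘ q ∘ hM.eigenvalues))) * star (star U * V) by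
    rw [hst]; noncomm_ring]
  generalize star U * V = W
  rw [Matrix.trace, Complex.re_sum]
  refine Finset.sum_congr rfl fun j _ => ?_
  rw [Matrix.diag_apply, Matrix.mul_apply, Complex.re_sum]
  refine Finset.sum_congr rfl fun k _ => ?_
  rw [Matrix.diagonal_mul, Matrix.mul_diagonal, Matrix.star_apply]
  simp only [Function.comp, Complex.coe_algebraMap, RCLike.star_def]
  rw [show ((p (hA.eigenvalues j) : ℝ) : ℂ) * (W j k * ((q (hM.eigenvalues k) : ℝ) : ℂ)) *
      (starRingEnd ℂ) (W j k) = ((p (hA.eigenvalues j) * q (hM.eigenvalues k) : ℝ) : ℂ) *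
      (W j k * (starRingEnd ℂ) (W j k)) by push_cast; ring, Complex.mul_conj]
  norm_cast

lemma sq_log_le_add_inv {r : ℝ} (hr : 0 < r) : Real.log r ^ 2 ≤ r - 2 + r⁻¹ := by
  have h1 := Real.cosh_log hr
  have h2 : Real.cosh (Real.log r) = 2 * Real.sinh (Real.log r / 2) ^ 2 + 1 := by
    have := Real.cosh_two_mul (Real.log r / 2)
    rw [mul_div_cancel₀ _ (two_ne_zero' ℝ), Real.cosh_sq] at this
    rw [this]; ring
  have h3 : (Real.log r / 2) ^ 2 ≤ Real.sinh (Real.log r / 2) ^ 2 := by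
    rw [sq_le_sq, Real.abs_sinh]
    exact Real.self_le_sinh_iff.2 (abs_nonneg _)
  nlinarith

/-- For fixed `l`, the function `log² μ` lies below `a + b μ + c μ⁻¹`, with equality and equal
derivative at `μ = l`. -/
lemma sq_log_majorant {l μ : ℝ} (hl : 0 < l) (hμ : 0 < μ) :
    Real.log μ ^ 2 ≤ Real.log l ^ 2
      + (2 * Real.log l + (2 * |Real.log l| + 1)) * l⁻¹ * (μ - l)
      + (2 * |Real.log l| + 1) * l * (μ⁻¹ - l⁻¹) := by
  obtain ⟨r, hr, rfl⟩ : ∃ r, 0 < r ∧ μ = r * l :=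
    ⟨μ / l, by positivity, by field_simp⟩
  rw [Real.log_mul hr.ne' hl.ne']
  have e1 : (2 * Real.log l + (2 * |Real.log l| + 1)) * l⁻¹ * (r * l - l) =
      (2 * Real.log l + (2 * |Real.log l| + 1)) * (r - 1) := by field_simp
  have e2 : (2 * |Real.log l| + 1) * l * ((r * l)⁻¹ - l⁻¹) =
      (2 * |Real.log l| + 1) * (r⁻¹ - 1) := by field_simp
  rw [e1, e2]
  have h1 := sq_log_le_add_inv hr
  have h2 : 0 ≤ r - 1 - Real.log r := by linarith [Real.log_le_sub_one_of_pos hr]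
  have h3 : r - 1 - Real.log r ≤ r - 2 + r⁻¹ := by
    have := Real.log_le_sub_one_of_pos (inv_pos.2 hr)
    rw [Real.log_inv] at this
    linarith
  have h4 : -Real.log l * (r - 1 - Real.log r) ≤ |Real.log l| * (r - 2 + r⁻¹) := by
    calc _ ≤ |Real.log l| * (r - 1 - Real.log r) :=
          mul_le_mul_of_nonneg_right (neg_le_abs _) h2
      _ ≤ _ := mul_le_mul_of_nonneg_left h3 (abs_nonneg _)
  nlinarith

/-- The coefficient matrix of `N` in the majorant of `Tr log² N` around `M`. -/
noncomputable def majP (M : Matrix (Fin m) (Fin m) ℂ) : Matrix (Fin m) (Fin m) ℂ :=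
  cfc (fun x : ℝ => (2 * Real.log x + (2 * |Real.log x| + 1)) * x⁻¹) M

/-- The coefficient matrix of `N⁻¹` in the majorant of `Tr log² N` around `M`. -/
noncomputable def majQ (M : Matrix (Fin m) (Fin m) ℂ) : Matrix (Fin m) (Fin m) ℂ :=
  cfc (fun x : ℝ => (2 * |Real.log x| + 1) * x) M

/-- Klein-type majorisation of `Tr log² N` around `M`, where `M'` and `N'` are the inverses of `M`
and `N`: the scalar majorant summed against the spectral weights. -/
lemma trace_sq_log_le {M M' N N' : Matrix (Fin m) (Fin m) ℂ} (hM : M.PosDef) (hN : N.PosDef)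
    (hM' : M * M' = 1) (hN' : N * N' = 1) :
    (cfc (fun x : ℝ => Real.log x ^ 2) N).trace.re ≤
      (cfc (fun x : ℝ => Real.log x ^ 2) M).trace.re + (majP M * (N - M)).trace.re
        + (majQ M * (N' - M')).trace.re := by
  have hMs : IsSelfAdjoint M := hM.isHermitian
  have hNs : IsSelfAdjoint N := hN.isHermitian
  obtain ⟨c, hc, htr⟩ := exists_trace_weights hM.isHermitian hN.isHermitian
  have t1 := htr (fun _ => 1) (fun x => Real.log x ^ 2)
  have t2 := htr (fun x => Real.log x ^ 2) (fun _ => 1)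
  have t3 := htr (fun x : ℝ => (2 * Real.log x + (2 * |Real.log x| + 1)) * x⁻¹) (fun x => x)
  have t4 := htr (fun x : ℝ => (2 * Real.log x + (2 * |Real.log x| + 1)) * x⁻¹ * x) (fun _ => 1)
  have t5 := htr (fun x : ℝ => (2 * |Real.log x| + 1) * x) (fun x => x⁻¹)
  have t6 := htr (fun x : ℝ => (2 * |Real.log x| + 1) * x * x⁻¹) (fun _ => 1)
  rw [cfc_const_one ℝ M hMs, one_mul] at t1
  rw [cfc_const_one ℝ N hNs, mul_one] at t2 t4 t6
  rw [cfc_id' ℝ N hNs] at t3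
  rw [← cfc_mul_cfc M _ (fun x => x), cfc_id' ℝ M hMs] at t4
  rw [cfc_inv_eq hN hN'] at t5
  rw [← cfc_mul_cfc M (fun x : ℝ => (2 * |Real.log x| + 1) * x) (fun x => x⁻¹),
    cfc_inv_eq hM hM'] at t6
  rw [majP, majQ, mul_sub, mul_sub, Matrix.trace_sub, Matrix.trace_sub, Complex.sub_re,
    Complex.sub_re, t1, t2, t3, t4, t5, t6]
  simp only [← Finset.sum_sub_distrib, ← Finset.sum_add_distrib]
  refine Finset.sum_le_sum fun j _ => Finset.sum_le_sum fun k _ => ?_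
  have := mul_le_mul_of_nonneg_right
    (sq_log_majorant (hM.eigenvalues_pos j) (hN.eigenvalues_pos k)) (hc j k)
  linarith

lemma rdist_sq {X A : Matrix (Fin m) (Fin m) ℂ} (hX : X.PosDef) (hA : A.PosDef) :
    rdist X A ^ 2 = (cfc (fun x : ℝ => Real.log x ^ 2)
      (X ^ (-(1 / 2) : ℝ) * A * X ^ (-(1 / 2) : ℝ))).trace.re := by
  have hP := isStrictlyPositive_iff_posDef.1 (rpow_conj_strictPos
    (isStrictlyPositive_iff_posDef.2 hX) (isStrictlyPositive_iff_posDef.2 hA) (-(1 / 2)))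
  rw [rdist, msqrt_inv_eq_rpow hX, mlog, matFun_eq_cfc hP.isHermitian, fnorm, Real.sq_sqrt]
  · have hs : (cfc Real.log (X ^ (-(1 / 2) : ℝ) * A * X ^ (-(1 / 2) : ℝ)))ᴴ =
        cfc Real.log (X ^ (-(1 / 2) : ℝ) * A * X ^ (-(1 / 2) : ℝ)) :=
      IsSelfAdjoint.log (a := X ^ (-(1 / 2) : ℝ) * A * X ^ (-(1 / 2) : ℝ))
    rw [hs, cfc_mul_cfc]
    simp only [sq]
  · exact (Complex.le_def.1 (Matrix.posSemidef_conjTranspose_mul_self _).trace_nonneg).1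

/-- `Tr f(P)` depends only on the characteristic polynomial of `P`. -/
lemma trace_cfc_eq_of_charpoly {P N : Matrix (Fin m) (Fin m) ℂ} (hP : P.IsHermitian)
    (hN : N.IsHermitian) (h : P.charpoly = N.charpoly) (f : ℝ → ℝ) :
    (cfc f P).trace = (cfc f N).trace := by
  have key : ∀ {Q : Matrix (Fin m) (Fin m) ℂ} (hQ : Q.IsHermitian),
      (cfc f Q).trace = ∑ i, ((f (hQ.eigenvalues i) : ℝ) : ℂ) := by
    intro Q hQ
    rw [hQ.cfc_eq, Matrix.IsHermitian.cfc, Unitary.conjStarAlgAut_apply, Matrix.trace_mul_comm,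
      ← mul_assoc, Unitary.coe_star_mul_self, one_mul, Matrix.trace_diagonal]
    rfl
  rw [key hP, key hN, (hP.eigenvalues_eq_eigenvalues_iff hN).2 h]

/-- In the formula for `δ²(Y, A)`, `Y^{-1/2}` may be replaced by any `G` with `Gᴴ G = Y⁻¹`. -/
lemma rdist_sq_of_factor {Y A G : Matrix (Fin m) (Fin m) ℂ} (hY : Y.PosDef) (hA : A.PosDef)
    (hG : Y * (Gᴴ * G) = 1) :
    rdist Y A ^ 2 = (cfc (fun x : ℝ => Real.log x ^ 2) (G * A * Gᴴ)).trace.re := by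
  have hYs := isStrictlyPositive_iff_posDef.2 hY
  have hP := isStrictlyPositive_iff_posDef.1 (rpow_conj_strictPos
    hYs (isStrictlyPositive_iff_posDef.2 hA) (-(1 / 2)))
  have hN : (G * A * Gᴴ).IsHermitian := Matrix.isHermitian_mul_mul_conjTranspose G hA.isHermitian
  rw [rdist_sq hY hA, trace_cfc_eq_of_charpoly hP.isHermitian hN]
  set s := Y ^ (-(1 / 2) : ℝ)
  have hs : s * s * Y = 1 := by
    nth_rw 1 [← rpow_half_mul_self hYs]
    calc s * s * (Y ^ (1 / 2 : ℝ) * Y ^ (1 / 2 : ℝ)) =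
        s * (s * Y ^ (1 / 2 : ℝ)) * Y ^ (1 / 2 : ℝ) := by noncomm_ring
      _ = 1 := by rw [CFC.rpow_neg_mul_rpow _ hYs, mul_one, CFC.rpow_neg_mul_rpow _ hYs]
  have he : s * s = Gᴴ * G := left_inv_eq_right_inv hs hG
  rw [Matrix.charpoly_mul_comm, ← mul_assoc, he, Matrix.charpoly_mul_comm (G * A), ← mul_assoc]

/-- A minimiser of the weighted sum of squared distances solves the Karcher equation: the left
side `L` is the direction of a competing curve through `X`, and the first-order condition along it
reads `Tr L² = 0`. -/
theorem karcher_of_min {n : ℕ} {A : Fin n → Matrix (Fin m) (Fin m) ℂ} (hA : ∀ i, (A i).PosDef)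
    {w : Fin n → ℝ} (hw : ∀ i, 0 < w i) {X : Matrix (Fin m) (Fin m) ℂ} (hX : X.PosDef)
    (hmin : ∀ Y : Matrix (Fin m) (Fin m) ℂ, Y.PosDef →
      ∑ i, w i * rdist X (A i) ^ 2 ≤ ∑ i, w i * rdist Y (A i) ^ 2) :
    ∑ i, w i • CFC.log (X ^ (-(1 / 2) : ℝ) * A i * X ^ (-(1 / 2) : ℝ)) = 0 := by
  have hXs := isStrictlyPositive_iff_posDef.2 hX
  have hM := fun i => rpow_conj_strictPos hXs (isStrictlyPositive_iff_posDef.2 (hA i)) (-(1 / 2))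
  have hrX := fun i => rdist_sq hX (hA i)
  set σ := X ^ (-(1 / 2) : ℝ) with hσ
  set h := X ^ (1 / 2 : ℝ) with hh
  set M : Fin n → Matrix (Fin m) (Fin m) ℂ := fun i => σ * A i * σ with hMdef
  change ∀ i, IsStrictlyPositive (M i) at hM
  change ∀ i, rdist X (A i) ^ 2 = (cfc (fun x : ℝ => Real.log x ^ 2) (M i)).trace.re at hrX
  change ∑ i, w i • CFC.log (M i) = 0
  set L := ∑ i, w i • CFC.log (M i) with hL
  have hMpd := fun i => isStrictlyPositive_iff_posDef.1 (hM i)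
  set M' : Fin n → Matrix (Fin m) (Fin m) ℂ := fun i => (M i)⁻¹ with hM'def
  have hMM' : ∀ i, M i * M' i = 1 := fun i =>
    Matrix.mul_nonsing_inv _ ((Matrix.isUnit_iff_isUnit_det _).1 (hM i).isUnit)
  have hLsa : L.IsHermitian := by
    refine isSelfAdjoint_sum _ fun i _ => ?_
    exact IsSelfAdjoint.smul (by simp [IsSelfAdjoint]) IsSelfAdjoint.log
  -- the competitor is `Y = h e^{-2sL} h`; `C` and `D` are the mutually inverse factors `e^{±sL}`
  set C : ℝ → Matrix (Fin m) (Fin m) ℂ := fun s => NormedSpace.exp (s • L) with hC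
  set D : ℝ → Matrix (Fin m) (Fin m) ℂ := fun s => NormedSpace.exp (s • (-L)) with hD
  have hCD : ∀ s, C s * D s = 1 := fun s => by
    simp only [hC, hD]
    rw [← Matrix.exp_add_of_commute]
    · simp
    · simp
  have hDC : ∀ s, D s * C s = 1 := fun s => mul_eq_one_comm.1 (hCD s)
  have hCs : ∀ s, (C s)ᴴ = C s := fun s =>
    Matrix.IsHermitian.exp (IsSelfAdjoint.smul (by simp [IsSelfAdjoint]) hLsa)
  have hDs : ∀ s, (D s)ᴴ = D s := fun s =>
    Matrix.IsHermitian.exp (IsSelfAdjoint.smul (by simp [IsSelfAdjoint]) hLsa.neg)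
  have hσs : σᴴ = σ := (CFC.rpow_nonneg (a := X)).isSelfAdjoint
  have hhs : hᴴ = h := (CFC.rpow_nonneg (a := X)).isSelfAdjoint
  have hhσ : h * σ = 1 := CFC.rpow_mul_rpow_neg _ hXs
  have hσh : σ * h = 1 := CFC.rpow_neg_mul_rpow _ hXs
  let T : Matrix (Fin m) (Fin m) ℂ →L[ℝ] ℝ := LinearMap.toContinuousLinearMap
    (Complex.reLm ∘ₗ Matrix.traceLinearMap (Fin m) ℝ ℂ)
  have hT : ∀ Q, T Q = Q.trace.re := fun Q => rfl
  have hTc : ∀ P Q, T (P * Q) = T (Q * P) := fun P Q => by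
    rw [hT, hT, Matrix.trace_mul_comm]
  -- the majorant of the increment of the objective between `X` and `h e^{-2sL} h`
  set Φ : ℝ → ℝ := fun s => ∑ i, w i * (T (majP (M i) * (C s * M i * C s - M i))
    + T (majQ (M i) * (D s * M' i * D s - M' i))) with hΦ
  have hC0 : C 0 = 1 := by simp [hC]
  have hD0 : D 0 = 1 := by simp [hD]
  have hΦ0 : Φ 0 = 0 := by simp [hΦ, hC0, hD0]
  have hΦnn : ∀ s, 0 ≤ Φ s := by
    intro s
    have hYpd : (h * D s * D s * h).PosDef := by
      rw [← isStrictlyPositive_iff_posDef]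
      have hu : IsUnit (D s * h) :=
        IsUnit.mul ⟨⟨D s, C s, hDC s, hCD s⟩, rfl⟩ ⟨⟨h, σ, hhσ, hσh⟩, rfl⟩
      have := (hu.isStrictlyPositive_star_left_conjugate_iff
        (a := (1 : Matrix (Fin m) (Fin m) ℂ))).2 isStrictlyPositive_one
      rw [star_eq_conjTranspose, Matrix.conjTranspose_mul, hDs, hhs] at this
      have e : h * D s * D s * h = h * D s * 1 * (D s * h) := by noncomm_ring
      rw [e]
      exact this
    have hGs : (C s * σ)ᴴ = σ * C s := by rw [Matrix.conjTranspose_mul, hCs, hσs]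
    have hfac : h * D s * D s * h * ((C s * σ)ᴴ * (C s * σ)) = 1 := by
      rw [hGs]
      calc _ = h * (D s * (D s * (h * σ) * C s) * C s) * σ := by noncomm_ring
        _ = 1 := by rw [hhσ, mul_one, hDC, mul_one, hDC, mul_one, hhσ]
    have hm := hmin _ hYpd
    have hN : ∀ i, C s * σ * A i * (C s * σ)ᴴ = C s * M i * C s := fun i => by
      rw [hGs, hMdef]; noncomm_ring
    simp only [fun i => rdist_sq_of_factor hYpd (hA i) hfac, hN, hrX] at hm
    have hbound : ∀ i, (cfc (fun x : ℝ => Real.log x ^ 2) (C s * M i * C s)).trace.re ≤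
        (cfc (fun x : ℝ => Real.log x ^ 2) (M i)).trace.re +
        (T (majP (M i) * (C s * M i * C s - M i))
          + T (majQ (M i) * (D s * M' i * D s - M' i))) := by
      intro i
      have hNpd : (C s * M i * C s).PosDef := by
        rw [← isStrictlyPositive_iff_posDef]
        exact IsStrictlyPositive.conjugate_of_isUnit_of_isSelfAdjoint _ _
          ⟨⟨C s, D s, hCD s, hDC s⟩, rfl⟩ (hCs s) (hM i)
      have hinv : C s * M i * C s * (D s * M' i * D s) = 1 := by
        calc _ = C s * (M i * (C s * D s) * M' i) * D s := by noncomm_ring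
          _ = 1 := by rw [hCD, mul_one, hMM', mul_one, hCD]
      have := trace_sq_log_le (hMpd i) hNpd (hMM' i) hinv
      rw [hT, hT]
      linarith
    have hsum := Finset.sum_le_sum fun i (_ : i ∈ Finset.univ) =>
      mul_le_mul_of_nonneg_left (hbound i) (hw i).le
    simp only [mul_add _ (Complex.re _), Finset.sum_add_distrib] at hsum
    have : ∑ i, w i * (T (majP (M i) * (C s * M i * C s - M i))
        + T (majQ (M i) * (D s * M' i * D s - M' i))) = Φ s := rfl
    linarith
  have hCd : HasDerivAt C L 0 := by
    simpa using hasDerivAt_exp_smul_const (𝕂 := ℝ) L 0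
  have hDd : HasDerivAt D (-L) 0 := by
    have := hasDerivAt_exp_smul_const (𝕂 := ℝ) (-L) 0
    rw [zero_smul, NormedSpace.exp_zero, one_mul] at this
    exact this
  have hΦd : HasDerivAt Φ (∑ i, w i * (T (majP (M i) * (L * M i + M i * L))
      + T (majQ (M i) * (-L * M' i + M' i * -L)))) 0 := by
    refine HasDerivAt.fun_sum fun i _ => HasDerivAt.const_mul _ (HasDerivAt.add ?_ ?_)
    · have h1 := ((hCd.mul_const (M i)).mul hCd).sub_const (M i)
      rw [hC0, mul_one, one_mul] at h1
      exact T.hasFDerivAt.comp_hasDerivAt 0 (h1.const_mul (majP (M i)))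
    · have h1 := ((hDd.mul_const (M' i)).mul hDd).sub_const (M' i)
      rw [hD0, mul_one, one_mul] at h1
      exact T.hasFDerivAt.comp_hasDerivAt 0 (h1.const_mul (majQ (M i)))
  have hloc : IsLocalMin Φ 0 := Filter.Eventually.of_forall fun s => by
    rw [hΦ0]; exact hΦnn s
  have hz := hloc.hasDerivAt_eq_zero hΦd
  -- the auxiliary part `K` of the two coefficients cancels, leaving the derivative of `Tr log²`
  have hterm : ∀ i, T (majP (M i) * (L * M i + M i * L))
      + T (majQ (M i) * (-L * M' i + M' i * -L)) = 4 * T (CFC.log (M i) * L) := by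
    intro i
    have hsp : ∀ x ∈ spectrum ℝ (M i), x ≠ 0 := fun x hx => ((hM i).spectrum_pos hx).ne'
    have hid := cfc_id' ℝ (M i) (hM i).isSelfAdjoint
    have hiv := cfc_inv_eq (hMpd i) (hMM' i)
    set K := cfc (fun x : ℝ => 2 * |Real.log x| + 1) (M i) with hK
    have a1 : majP (M i) * M i = (2 : ℝ) • CFC.log (M i) + K := by
      nth_rw 2 [← hid]
      rw [majP, cfc_mul_cfc, CFC.log, hK, ← cfc_smul _ _ _ (continuousOn_real_spectrum _ _),
        ← cfc_add _ _ _ (continuousOn_real_spectrum _ _) (continuousOn_real_spectrum _ _)]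
      refine cfc_congr fun x hx => ?_
      simp [hsp x hx]
    have a2 : M i * majP (M i) = majP (M i) * M i := by
      nth_rw 1 [← hid]
      nth_rw 4 [← hid]
      rw [majP, cfc_mul_cfc, cfc_mul_cfc]
      simp only [mul_comm]
    have a3 : majQ (M i) * M' i = K := by
      rw [← hiv, majQ, cfc_mul_cfc]
      refine cfc_congr fun x hx => ?_
      simp [hsp x hx]
    have a4 : M' i * majQ (M i) = majQ (M i) * M' i := by
      rw [← hiv, majQ, cfc_mul_cfc, cfc_mul_cfc]
      simp only [mul_comm]
    have b1 : T (majP (M i) * (L * M i)) = T (((2 : ℝ) • CFC.log (M i) + K) * L) := by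
      rw [← mul_assoc, hTc, ← mul_assoc, a2, a1]
    have b2 : T (majP (M i) * (M i * L)) = T (((2 : ℝ) • CFC.log (M i) + K) * L) := by
      rw [← mul_assoc, a1]
    have b3 : T (majQ (M i) * (-L * M' i)) = -T (K * L) := by
      rw [← mul_assoc, hTc, ← mul_assoc, a4, a3, mul_neg, map_neg]
    have b4 : T (majQ (M i) * (M' i * -L)) = -T (K * L) := by
      rw [← mul_assoc, a3, mul_neg, map_neg]
    rw [mul_add, mul_add, map_add, map_add, b1, b2, b3, b4, add_mul, map_add, smul_mul_assoc,
      map_smul, smul_eq_mul]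
    ring
  simp only [hterm] at hz
  have hTL : T (L * L) = 0 := by
    have : T (L * L) = ∑ i, w i * T (CFC.log (M i) * L) := by
      nth_rw 1 [hL]
      rw [Finset.sum_mul, map_sum]
      refine Finset.sum_congr rfl fun i _ => ?_
      rw [smul_mul_assoc, map_smul, smul_eq_mul]
    have h4 : ∑ i, w i * (4 * T (CFC.log (M i) * L)) =
        4 * ∑ i, w i * T (CFC.log (M i) * L) := by
      rw [Finset.mul_sum]
      exact Finset.sum_congr rfl fun i _ => by ring
    linarith
  have htr : (Lᴴ * L).trace = 0 := by
    have hnn := (Matrix.posSemidef_conjTranspose_mul_self L).trace_nonneg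
    rw [hLsa.eq] at hnn ⊢
    exact Complex.ext hTL (Complex.le_def.1 hnn).2.symm
  exact Matrix.trace_conjTranspose_mul_self_eq_zero_iff.1 htr

theorem loewner_of_min {n : ℕ} {A B : Fin n → Matrix (Fin m) (Fin m) ℂ}
    (hA : ∀ i, (A i).PosDef) (hB : ∀ i, (B i).PosDef) (hAB : ∀ i, Loewner (A i) (B i))
    {w : Fin n → ℝ} (hw : ∀ i, 0 < w i) (hw1 : ∑ i, w i = 1)
    {X Z : Matrix (Fin m) (Fin m) ℂ} (hX : X.PosDef) (hZ : Z.PosDef)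
    (hXmin : ∀ Y : Matrix (Fin m) (Fin m) ℂ, Y.PosDef →
      ∑ i, w i * rdist X (A i) ^ 2 ≤ ∑ i, w i * rdist Y (A i) ^ 2)
    (hZmin : ∀ Y : Matrix (Fin m) (Fin m) ℂ, Y.PosDef →
      ∑ i, w i * rdist Z (B i) ^ 2 ≤ ∑ i, w i * rdist Y (B i) ^ 2) :
    Loewner X Z := by
  have hA' := fun i => isStrictlyPositive_iff_posDef.2 (hA i)
  have hB' := fun i => isStrictlyPositive_iff_posDef.2 (hB i)
  -- the order of the scope `MatrixOrder` is by definition the Loewner order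
  exact karcher_mono hA' hB' hAB hw hw1 (isStrictlyPositive_iff_posDef.2 hX)
    (isStrictlyPositive_iff_posDef.2 hZ) (karcher_of_min hA hw hX hXmin)
    (karcher_of_min hB hw hZ hZmin)

end MatrixPart

/-- Monotonicity of the least squares mean: if `Aᵢ ≤ Bᵢ` in the Loewner order for all `i`,
and `X`, `Z` are the minimizers of the respective weighted sums of squared distances, then
`X ≤ Z` in the Loewner order. -/
theorem least_squares_mean_monotone {m n : ℕ}
    (A B : Fin n → Matrix (Fin m) (Fin m) ℂ)
    (hA : ∀ i, (A i).PosDef) (hB : ∀ i, (B i).PosDef)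
    (hAB : ∀ i, Loewner (A i) (B i))
    (w : Fin n → ℝ) (hw : ∀ i, 0 < w i) (hw1 : ∑ i, w i = 1)
    (X Z : Matrix (Fin m) (Fin m) ℂ) (hX : X.PosDef) (hZ : Z.PosDef)
    (hXmin : ∀ Y : Matrix (Fin m) (Fin m) ℂ, Y.PosDef →
      ∑ i, w i * rdist X (A i) ^ 2 ≤ ∑ i, w i * rdist Y (A i) ^ 2)
    (hXuniq : ∀ X' : Matrix (Fin m) (Fin m) ℂ, X'.PosDef →
      (∀ Y : Matrix (Fin m) (Fin m) ℂ, Y.PosDef →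
        ∑ i, w i * rdist X' (A i) ^ 2 ≤ ∑ i, w i * rdist Y (A i) ^ 2) → X' = X)
    (hZmin : ∀ Y : Matrix (Fin m) (Fin m) ℂ, Y.PosDef →
      ∑ i, w i * rdist Z (B i) ^ 2 ≤ ∑ i, w i * rdist Y (B i) ^ 2)
    (hZuniq : ∀ Z' : Matrix (Fin m) (Fin m) ℂ, Z'.PosDef →
      (∀ Y : Matrix (Fin m) (Fin m) ℂ, Y.PosDef →
        ∑ i, w i * rdist Z' (B i) ^ 2 ≤ ∑ i, w i * rdist Y (B i) ^ 2) → Z' = Z) :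
    Loewner X Z := by
  exact loewner_of_min hA hB hAB hw hw1 hX hZ hXmin hZmin
end
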